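/- arXiv:1807.07890 — 3 statements merged into one kernel-verified Lean document; each statement's English description precedes it below -/
import Mathlib

section
/- For every integer b ≥ 2 and every integer n ≥ 1, S_b(n) = ((b-1)/(2 log b)) · n · log n + n · ∑_{k ∈ ℤ} c_b(k) e^{2πik (log n / log b)}, where the sum over k ∈ ℤ converges absolutely; here the left side is the integer S_b(n) viewed as a complex number. -/
noncomputable section

/-- The base-`b` digit sum of `n`. -/
def digitSum (b n : ℕ) : ℕ := (Nat.digits b n).sum

/-- The cumulative base-`b` digit sum `S_b(n) = ∑_{m=1}^{n-1} d_b(m)`. -/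
def cumDigitSum (b n : ℕ) : ℕ := ∑ m ∈ Finset.range n, digitSum b m

/-- The Fourier coefficients `c_β(k)` from Delange's theorem. -/
def delangeCoeff (β : ℝ) (k : ℤ) : ℂ :=
  if k = 0 then
    ((((β : ℂ) - 1) / (2 * Real.log β)) * (Real.log (2 * Real.pi) - 1) - ((β : ℂ) + 1) / 4)
  else
    -(((β : ℂ) - 1) / (2 * Real.pi * Complex.I * k)) *
      (1 + 2 * Real.pi * Complex.I * k / Real.log β)⁻¹ *
      riemannZeta (2 * Real.pi * Complex.I * k / Real.log β)

namespace DelangeAux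
open MeasureTheory Set Filter Topology

/-- The antiderivative of the sawtooth function. -/
def Bf (t : ℝ) : ℝ := (Int.fract t ^ 2 - Int.fract t) / 2

lemma Bf_cont : Continuous Bf := by
  have : Continuous ((fun x : ℝ => (x ^ 2 - x) / 2) ∘ Int.fract) := by
    apply ContinuousOn.comp_fract''
    · fun_prop
    · norm_num
  exact this

lemma Bf_abs_le (t : ℝ) : |Bf t| ≤ 1 := by
  have h0 := Int.fract_nonneg t
  have h1 := (Int.fract_lt_one t).le
  rw [abs_le]; unfold Bf
  constructor <;> nlinarith

lemma Bf_nat (n : ℕ) : Bf n = 0 := by simp [Bf]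

lemma Bf_of_mem {t : ℝ} {N : ℕ} (h : (N : ℝ) ≤ t) (h' : t < N + 1) :
    Bf t = ((t - N) ^ 2 - (t - N)) / 2 := by
  have : Int.fract t = t - N := by
    rw [Int.fract_eq_iff]
    refine ⟨by linarith, by linarith, N, by simp⟩
  rw [Bf, this]

lemma Bf_of_mem' {t : ℝ} {N : ℕ} (h : (N : ℝ) ≤ t) (h' : t ≤ N + 1) :
    Bf t = ((t - N) ^ 2 - (t - N)) / 2 := by
  rcases h'.lt_or_eq with h' | h'
  · exact Bf_of_mem h h'
  · have := Bf_nat (N + 1)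
    push_cast at this
    rw [h', this]; ring

/-- Tail integral in the Euler-Maclaurin formula. -/
def II (N : ℕ) (s : ℂ) : ℂ := ∫ t in Ioi (N : ℝ), (Bf t : ℂ) * (t : ℂ) ^ (-s - 2)

lemma II_integrable {N : ℕ} (hN : 1 ≤ N) {s : ℂ} (hs : -1 < s.re) :
    IntegrableOn (fun t : ℝ => (Bf t : ℂ) * (t : ℂ) ^ (-s - 2)) (Ioi (N : ℝ)) := by
  have hN' : (0 : ℝ) < N := by exact_mod_cast hN
  refine Integrable.bdd_mul (c := 1)
    (integrableOn_Ioi_cpow_of_lt (by simp; linarith) hN') ?_ ?_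
  · exact (Complex.continuous_ofReal.comp Bf_cont).aestronglyMeasurable
  · refine Eventually.of_forall fun t => ?_
    simpa using Bf_abs_le t

lemma II_norm_le {N : ℕ} (hN : 1 ≤ N) {s : ℂ} (hs : -1 < s.re) :
    ‖II N s‖ ≤ (N : ℝ) ^ (-s.re - 1) / (s.re + 1) := by
  have hN' : (0 : ℝ) < N := by exact_mod_cast hN
  have h1 : ‖II N s‖ ≤ ∫ t in Ioi (N : ℝ), t ^ (-s.re - 2) := by
    unfold II
    refine norm_integral_le_of_norm_le (integrableOn_Ioi_rpow_of_lt (by linarith) hN') ?_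
    refine (ae_restrict_mem measurableSet_Ioi).mono fun t ht => ?_
    have ht' : 0 < t := hN'.trans ht
    rw [norm_mul, Complex.norm_cpow_eq_rpow_re_of_pos ht']
    simp only [Complex.norm_real, Complex.sub_re, Complex.neg_re, Complex.re_ofNat,
      Real.norm_eq_abs]
    have := Bf_abs_le t
    have h3 : 0 ≤ t ^ (-s.re - 2) := by positivity
    nlinarith
  refine h1.trans (le_of_eq ?_)
  rw [integral_Ioi_rpow_of_lt (by linarith) hN']
  rw [show -s.re - 2 + 1 = -s.re - 1 by ring, show -s.re - 1 = -(s.re + 1) by ring, neg_div_neg_eq]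

lemma II_step {N : ℕ} (hN : 1 ≤ N) {s : ℂ} (hs : -1 < s.re) (hs1 : s ≠ 1) :
    s * (s + 1) * (II N s - II (N + 1) s) =
      -((N : ℂ) + 1) ^ (-s) / 2 - (N : ℂ) ^ (-s) / 2 -
        (((N : ℂ) + 1) ^ (1 - s) - (N : ℂ) ^ (1 - s)) / (s - 1) := by
  have hN' : (0 : ℝ) < N := by exact_mod_cast hN
  have h1 : II N s - II (N + 1) s =
      ∫ t in (N : ℝ)..(N + 1), (Bf t : ℂ) * (t : ℂ) ^ (-s - 2) := by
    have := intervalIntegral.integral_Ioi_sub_Ioi (II_integrable hN hs) (b := (N : ℝ) + 1)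
      (by linarith)
    unfold II
    push_cast
    exact this
  set P : ℝ → ℂ := fun t => (s * (s + 1) * ((t : ℂ) ^ (1 - s) / (1 - s)) +
    (2 * N + 1) * (s + 1) * (t : ℂ) ^ (-s) - N * (N + 1) * s * (t : ℂ) ^ (-s - 1)) / 2 with hP
  have hs1' : (1 : ℂ) - s ≠ 0 := sub_ne_zero.mpr hs1.symm
  have h2 : s * (s + 1) * ∫ t in (N : ℝ)..(N + 1), (Bf t : ℂ) * (t : ℂ) ^ (-s - 2) =
      P (N + 1) - P N := by
    rw [← intervalIntegral.integral_const_mul]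
    apply intervalIntegral.integral_eq_sub_of_hasDerivAt
    · intro t ht
      rw [uIcc_of_le (by linarith)] at ht
      have ht' : 0 < t := hN'.trans_le ht.1
      have htc : (t : ℂ) ≠ 0 := by exact_mod_cast ht'.ne'
      have key : ∀ w : ℂ, HasDerivAt (fun t : ℝ => (t : ℂ) ^ w) (w * (t : ℂ) ^ (w - 1)) t := by
        intro w
        have := (HasDerivAt.cpow_const (c := w) (hasDerivAt_id (t : ℂ))
          (Or.inl (by simpa using ht'))).comp_ofReal
        simpa using this
      have := ((((key (1 - s)).div_const (1 - s)).const_mul (s * (s + 1))).add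
        ((key (-s)).const_mul ((2 * N + 1) * (s + 1)))).sub
        ((key (-s - 1)).const_mul (N * (N + 1) * s)) |>.div_const 2
      convert! this using 1
      rw [Bf_of_mem' ht.1 ht.2]
      push_cast
      rw [show (1 - s - 1) = (-s - 2) + 1 + 1 by ring, show -s - 1 = -s - 2 + 1 by ring,
        show -s - 2 + 1 - 1 = -s - 2 by ring, Complex.cpow_add _ _ htc, Complex.cpow_add _ _ htc]
      field_simp
      simp only [Complex.cpow_one]
      ring
    · apply ContinuousOn.intervalIntegrable
      rw [uIcc_of_le (by linarith)]
      refine continuousOn_const.mul ((Complex.continuous_ofReal.comp Bf_cont).continuousOn.mul ?_)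
      intro t ht
      have ht' : 0 < t := hN'.trans_le ht.1
      refine ContinuousAt.continuousWithinAt ?_
      exact Complex.continuousAt_ofReal_cpow_const _ _ (Or.inr ht'.ne')
  rw [h1, h2, hP]
  have e1 : (N : ℂ) ≠ 0 := by exact_mod_cast hN'.ne'
  have e2 : (N : ℂ) + 1 ≠ 0 := by exact_mod_cast (by positivity : (N : ℝ) + 1 ≠ 0)
  have g : ∀ z : ℂ, z ≠ 0 → z ^ (1 - s) = z * z ^ (-s) ∧ z ^ (-s - 1) = z ^ (-s) / z := by
    intro z hz
    constructor
    · rw [sub_eq_add_neg, Complex.cpow_add _ _ hz, Complex.cpow_one]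
    · rw [Complex.cpow_sub _ _ hz, Complex.cpow_one]
  simp only [Complex.ofReal_add, Complex.ofReal_natCast, Complex.ofReal_one]
  rw [(g _ e1).1, (g _ e1).2, (g _ e2).1, (g _ e2).2]
  have : s - 1 ≠ 0 := sub_ne_zero.mpr hs1
  field_simp
  ring

def EM (N : ℕ) (s : ℂ) : ℂ := ∑ n ∈ Finset.range N, ((n : ℂ) + 1) ^ (-s) +
  (N : ℂ) ^ (1 - s) / (s - 1) - (N : ℂ) ^ (-s) / 2 - s * (s + 1) * II N s

lemma EM_step {N : ℕ} (hN : 1 ≤ N) {s : ℂ} (hs : -1 < s.re) (hs1 : s ≠ 1) :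
    EM (N + 1) s = EM N s := by
  have := II_step hN hs hs1
  unfold EM
  rw [Finset.sum_range_succ]
  push_cast
  linear_combination this

lemma EM_const {N : ℕ} (hN : 1 ≤ N) {s : ℂ} (hs : -1 < s.re) (hs1 : s ≠ 1) :
    EM N s = EM 1 s := by
  induction N, hN using Nat.le_induction with
  | base => rfl
  | succ n hn ih => rw [EM_step hn hs hs1, ih]

lemma tendsto_nat_cpow_zero {w : ℂ} (hw : w.re < 0) :
    Tendsto (fun N : ℕ => (N : ℂ) ^ w) atTop (𝓝 0) := by
  rw [tendsto_zero_iff_norm_tendsto_zero]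
  have h : Tendsto (fun N : ℕ => (N : ℝ) ^ (w.re)) atTop (𝓝 0) := by
    have := (tendsto_rpow_neg_atTop (y := -w.re) (by linarith)).comp tendsto_natCast_atTop_atTop
    simpa [Function.comp_def] using this
  refine h.congr' ?_
  filter_upwards [eventually_ge_atTop 1] with N hN
  rw [Complex.norm_natCast_cpow_of_pos (by omega)]

lemma EM_eq_of_one_lt {s : ℂ} (hs : 1 < s.re) : EM 1 s = riemannZeta s := by
  have hs1 : s ≠ 1 := by rintro rfl; simp at hs
  have h1 : Tendsto (fun N : ℕ => EM N s) atTop (𝓝 (EM 1 s)) := by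
    refine tendsto_const_nhds.congr' ?_
    filter_upwards [eventually_ge_atTop 1] with N hN
    exact (EM_const hN (by linarith) hs1).symm
  refine tendsto_nhds_unique h1 ?_
  have h2 : HasSum (fun n : ℕ => ((n : ℂ) + 1) ^ (-s)) (riemannZeta s) := by
    have hsum := (summable_nat_add_iff 1).mpr (Complex.summable_one_div_nat_cpow.mpr hs)
    have := hsum.hasSum
    push_cast at this
    rw [← zeta_eq_tsum_one_div_nat_add_one_cpow hs] at this
    convert! this using 2 with n
    rw [Complex.cpow_neg, one_div]
  have h3 : Tendsto (fun N : ℕ => II N s) atTop (𝓝 0) := by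
    rw [tendsto_zero_iff_norm_tendsto_zero]
    have h : Tendsto (fun N : ℕ => (N : ℝ) ^ (-s.re - 1) / (s.re + 1)) atTop (𝓝 0) := by
      have := ((tendsto_rpow_neg_atTop (y := s.re + 1) (by linarith)).comp
        tendsto_natCast_atTop_atTop).div_const (s.re + 1)
      simp only [zero_div, Function.comp_def] at this
      convert! this using 4
      ring
    refine squeeze_zero' (Eventually.of_forall fun _ => norm_nonneg _) ?_ h
    filter_upwards [eventually_ge_atTop 1] with N hN
    exact II_norm_le hN (by linarith)
  have h4 := tendsto_nat_cpow_zero (w := 1 - s) (by simp; linarith)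
  have h5 := tendsto_nat_cpow_zero (w := -s) (by simp; linarith)
  have := ((h2.tendsto_sum_nat.add (h4.div_const (s - 1))).sub (h5.div_const 2)).sub
    (h3.const_mul (s * (s + 1)))
  simpa [EM] using this

lemma II_diff {s : ℂ} (hs : -1 < s.re) : DifferentiableAt ℂ (II 1) s := by
  set f : ℝ → ℂ := (Ioi (1 : ℝ)).indicator (fun t => (Bf t : ℂ)) with hf
  have e : II 1 = fun s => mellin f (-s - 1) := by
    ext s
    unfold II mellin
    have : ∀ t : ℝ, (t : ℂ) ^ (-s - 1 - 1) • f t =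
        (Ioi (1 : ℝ)).indicator (fun t : ℝ => (Bf t : ℂ) * (t : ℂ) ^ (-s - 2)) t := by
      intro t
      by_cases ht : t ∈ Ioi (1 : ℝ)
      · simp only [hf, indicator_of_mem ht, smul_eq_mul]
        rw [mul_comm]; congr 2; ring
      · simp [hf, indicator_of_notMem ht]
    simp_rw [this]
    rw [setIntegral_indicator measurableSet_Ioi]
    congr 2
    ext x; simp
  rw [e]
  have hm : DifferentiableAt ℂ (mellin f) (-s - 1) := by
    refine mellin_differentiableAt_of_isBigO_rpow (a := 0) (b := -s.re - 2) ?_ ?_ ?_ ?_ ?_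
    · refine LocallyIntegrable.locallyIntegrableOn ?_ _
      refine LocallyIntegrable.indicator ?_ measurableSet_Ioi
      exact (Complex.continuous_ofReal.comp Bf_cont).locallyIntegrable
    · refine Asymptotics.IsBigO.of_bound 1 (Eventually.of_forall fun t => ?_)
      simp only [neg_zero, Real.rpow_zero, norm_one, mul_one]
      refine (norm_indicator_le_norm_self _ _).trans ?_
      simpa using Bf_abs_le t
    · simp; linarith
    · refine Asymptotics.IsBigO.of_bound 1 ?_
      filter_upwards [nhdsWithin_le_nhds (Iio_mem_nhds (zero_lt_one))] with t ht
      have : t ∉ Ioi (1 : ℝ) := by simp at ht ⊢; linarith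
      rw [hf, indicator_of_notMem this]
      simp
    · simp
  exact DifferentiableAt.comp (g := mellin f) (f := fun s : ℂ => -s - 1) s hm (by fun_prop)

lemma EM_eq {s : ℂ} (hs : -1 < s.re) (hs1 : s ≠ 1) : EM 1 s = riemannZeta s := by
  set U : Set ℂ := {s : ℂ | -1 < s.re} with hU
  have hUo : IsOpen U := isOpen_lt continuous_const Complex.continuous_re
  have hUc : IsPreconnected U := (convex_halfSpace_re_gt (-1)).isPreconnected
  set G : ℂ → ℂ := fun s => (s - 1) + 1 - (s - 1) / 2 - (s - 1) * (s * (s + 1) * II 1 s) with hG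
  have hGd : DifferentiableOn ℂ G U := by
    intro z hz
    have := II_diff (s := z) hz
    refine DifferentiableAt.differentiableWithinAt ?_
    fun_prop
  have hGe : ∀ z, z ≠ 1 → G z = (z - 1) * EM 1 z := by
    intro z hz
    have : z - 1 ≠ 0 := sub_ne_zero.mpr hz
    simp only [hG, EM]
    simp
    field_simp
    ring
  have := AnalyticOnNhd.eqOn_of_preconnected_of_eventuallyEq (hGd.analyticOnNhd hUo)
    (differentiable_riemannZeta₁.differentiableOn.analyticOnNhd hUo) hUc
    (z₀ := 2) (by simp [hU]; norm_num) ?_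
  · have h := this hs
    have hz := riemannZeta_eq_inv_sub_mul hs1
    have h1 : s - 1 ≠ 0 := sub_ne_zero.mpr hs1
    rw [hGe s hs1] at h
    rw [hz, ← h]
    field_simp
  · have : {z : ℂ | 1 < z.re} ∈ 𝓝 (2 : ℂ) :=
      (isOpen_lt continuous_const Complex.continuous_re).mem_nhds (by simp)
    filter_upwards [this] with z hz
    have hz1 : z ≠ 1 := by rintro rfl; simp at hz
    have h1 : z - 1 ≠ 0 := sub_ne_zero.mpr hz1
    rw [hGe z hz1, EM_eq_of_one_lt hz, riemannZeta_eq_inv_sub_mul hz1]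
    field_simp

/-- value of the Mellin-type integral -/
lemma II_eq {s : ℂ} (hs : -1 < s.re) (hs1 : s ≠ 1) :
    s * (s + 1) * II 1 s = 1 / (s - 1) + 1 / 2 - riemannZeta s := by
  rw [← EM_eq hs hs1]
  simp [EM]
  ring

lemma II_zero : II 1 0 = -1 + Real.log (2 * Real.pi) / 2 := by
  have h1 : HasDerivAt (fun s : ℂ => s * ((s + 1) * II 1 s)) (II 1 0) 0 := by
    have hd := (II_diff (s := 0) (by simp)).hasDerivAt
    have := (hasDerivAt_id (0 : ℂ)).mul (((hasDerivAt_id (0 : ℂ)).add_const 1).mul hd)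
    convert! this using 1
    simp
  have h2 : HasDerivAt (fun s : ℂ => 1 / (s - 1) + 1 / 2 - riemannZeta s)
      (-1 - deriv riemannZeta 0) 0 := by
    have hz := (differentiableAt_riemannZeta (s := 0) (by simp)).hasDerivAt
    have := (((hasDerivAt_id (0 : ℂ)).sub_const 1).inv (by simp)).add_const (1 / 2) |>.sub hz
    convert! this using 1
    · ext s; simp
    · simp
  have h3 := h1.congr_of_eventuallyEq (f₁ := fun s : ℂ => 1 / (s - 1) + 1 / 2 - riemannZeta s) ?_
  · rw [h3.unique h2, deriv_riemannZeta_zero]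
    have : (Real.log (2 * Real.pi) : ℂ) = Complex.log (2 * Real.pi) := by
      rw [Complex.ofReal_log (by positivity)]; push_cast; rfl
    rw [this]; ring
  · have : {z : ℂ | -1 < z.re} ∩ {1}ᶜ ∈ 𝓝 (0 : ℂ) :=
      ((isOpen_lt continuous_const Complex.continuous_re).inter isOpen_compl_singleton).mem_nhds
        (by simp)
    filter_upwards [this] with z hz
    rw [← II_eq hz.1 hz.2]; ring

lemma zeta_one_bound {τ : ℝ} (hτ : τ ≠ 0) :
    ‖riemannZeta (1 + τ * Complex.I)‖ ≤ 5 + 1 / |τ| + Real.log (|τ| + 1) := by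
  set s : ℂ := 1 + τ * Complex.I with hs
  have hre : s.re = 1 := by simp [hs]
  have hs1 : s ≠ 1 := by
    intro h
    have := congrArg Complex.im h
    simp [hs] at this
    exact hτ this
  have hτ' : 0 < |τ| := abs_pos.mpr hτ
  set N : ℕ := ⌈|τ|⌉₊ with hNdef
  have hN : 1 ≤ N := Nat.ceil_pos.mpr hτ'
  have hN1 : (1 : ℝ) ≤ N := by exact_mod_cast hN
  have hN0 : (0 : ℝ) < N := by linarith
  have hle : |τ| ≤ N := Nat.le_ceil _
  have hlt : (N : ℝ) < |τ| + 1 := Nat.ceil_lt_add_one hτ'.le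
  rw [← EM_eq (by rw [hre]; norm_num) hs1, ← EM_const hN (by rw [hre]; norm_num) hs1, EM]
  have a1 : ‖∑ n ∈ Finset.range N, ((n : ℂ) + 1) ^ (-s)‖ ≤ 1 + Real.log (|τ| + 1) := by
    refine (norm_sum_le _ _).trans ?_
    have : ∀ n ∈ Finset.range N, ‖((n : ℂ) + 1) ^ (-s)‖ = ((n : ℝ) + 1)⁻¹ := by
      intro n _
      have := Complex.norm_natCast_cpow_of_pos (n := n + 1) (by omega) (-s)
      push_cast at this
      rw [this]
      simp [hre, Real.rpow_neg_one]
    rw [Finset.sum_congr rfl this]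
    have h := harmonic_le_one_add_log N
    have h' : Real.log N ≤ Real.log (|τ| + 1) := Real.log_le_log hN0 hlt.le
    have e : ((harmonic N : ℚ) : ℝ) = ∑ n ∈ Finset.range N, ((n : ℝ) + 1)⁻¹ := by
      simp [harmonic]
    rw [← e]; linarith
  have a2 : ‖(N : ℂ) ^ (1 - s) / (s - 1)‖ ≤ 1 / |τ| := by
    rw [norm_div, Complex.norm_natCast_cpow_of_pos (by omega)]
    simp [hs]
  have a3 : ‖(N : ℂ) ^ (-s) / 2‖ ≤ 1 := by
    rw [norm_div, Complex.norm_natCast_cpow_of_pos (by omega)]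
    simp only [Complex.neg_re, hre, Real.rpow_neg_one]
    have : (N : ℝ)⁻¹ ≤ 1 := inv_le_one_of_one_le₀ hN1
    simp
    linarith
  have a4 : ‖s * (s + 1) * II N s‖ ≤ 3 := by
    have b1 : ‖s‖ ≤ 2 * N := by
      refine (norm_add_le _ _).trans ?_
      simp
      linarith
    have b2 : ‖s + 1‖ ≤ 3 * N := by
      refine (norm_add_le _ _).trans ?_
      have : ‖s‖ ≤ 2 * N := b1
      simp
      linarith
    have b3 := II_norm_le hN (s := s) (by rw [hre]; norm_num)
    rw [hre] at b3
    have b4 : (N : ℝ) ^ (-1 - 1 : ℝ) = ((N : ℝ) ^ 2)⁻¹ := by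
      rw [show (-1 - 1 : ℝ) = -(2 : ℕ) by norm_num, Real.rpow_neg hN0.le, Real.rpow_natCast]
    rw [b4] at b3
    rw [norm_mul, norm_mul]
    calc ‖s‖ * ‖s + 1‖ * ‖II N s‖ ≤ (2 * N) * (3 * N) * (((N : ℝ) ^ 2)⁻¹ / (1 + 1)) := by gcongr
      _ = 3 := by field_simp; norm_num
  calc _ ≤ _ := norm_sub_le _ _
    _ ≤ _ := add_le_add (norm_sub_le _ _) le_rfl
    _ ≤ _ := add_le_add (add_le_add (norm_add_le _ _) le_rfl) le_rfl
    _ ≤ _ := by linarith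

lemma zeta_imag_bound {t : ℝ} (ht : t ≠ 0) :
    ‖riemannZeta (t * Complex.I)‖ ^ 2 ≤ |t| * ‖riemannZeta (1 + (-t : ℝ) * Complex.I)‖ ^ 2 := by
  set z : ℂ := t * Complex.I with hz
  have hzne : z ≠ 0 := by simp [hz, ht]
  have h1z : (1 : ℂ) + (-t : ℝ) * Complex.I = 1 - z := by simp [hz]; ring
  rw [h1z]
  have hfe := riemannZeta_one_sub (s := 1 - z) ?_ ?_
  rotate_left
  · intro n h
    have := congrArg Complex.im h
    simp [hz] at this
    exact ht this
  · simpa using hzne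
  rw [sub_sub_cancel] at hfe
  rw [hfe]
  have hcos : Complex.cos (Real.pi * (1 - z) / 2) = Complex.sin (Real.pi * z / 2) := by
    rw [show (Real.pi * (1 - z) / 2 : ℂ) = Real.pi / 2 - Real.pi * z / 2 by ring,
      Complex.cos_pi_div_two_sub]
  rw [hcos]
  set sh := Complex.sin (Real.pi * z / 2) with hsh
  set ch := Complex.cos (Real.pi * z / 2) with hch
  have hpz : (Real.pi * z / 2 : ℂ) = ((Real.pi * t / 2 : ℝ) : ℂ) * Complex.I := by
    simp [hz]; ring
  have nsh : ‖sh‖ = |Real.sinh (Real.pi * t / 2)| := by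
    rw [hsh, hpz, Complex.sin_mul_I, ← Complex.ofReal_sinh, norm_mul, Complex.norm_I, mul_one,
      Complex.norm_real, Real.norm_eq_abs]
  have nch : ‖ch‖ = |Real.cosh (Real.pi * t / 2)| := by
    rw [hch, hpz, Complex.cos_mul_I, ← Complex.ofReal_cosh, Complex.norm_real, Real.norm_eq_abs]
  have shle : ‖sh‖ ≤ ‖ch‖ := by
    rw [nsh, nch]
    apply sq_le_sq.mp
    have := Real.cosh_sq (Real.pi * t / 2)
    linarith
  have shpos : 0 < ‖sh‖ := by
    rw [nsh]
    apply abs_pos.mpr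
    rw [Ne, Real.sinh_eq_zero]
    have := Real.pi_pos
    positivity
  have chpos : 0 < ‖ch‖ := shpos.trans_le shle
  -- Gamma
  have hG : ‖Complex.Gamma (1 - z)‖ ^ 2 * (2 * ‖sh‖ * ‖ch‖) = |t| * Real.pi := by
    have r := Complex.Gamma_mul_Gamma_one_sub z
    have hconj : ‖Complex.Gamma (1 - z)‖ = ‖Complex.Gamma (1 + z)‖ := by
      rw [← Complex.norm_conj, ← Complex.Gamma_conj]
      congr 2
      simp [hz]
    have hadd : Complex.Gamma (1 + z) = z * Complex.Gamma z := by
      rw [add_comm, Complex.Gamma_add_one z hzne]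
    have hsin : Complex.sin (Real.pi * z) = 2 * sh * ch := by
      rw [hsh, hch, ← Complex.sin_two_mul]; congr 1; ring
    have hshne : sh ≠ 0 := norm_pos_iff.mp shpos
    have hchne : ch ≠ 0 := norm_pos_iff.mp chpos
    have hprod : Complex.Gamma (1 + z) * Complex.Gamma (1 - z) * (2 * sh * ch) = z * Real.pi := by
      rw [hadd, mul_assoc z, r, hsin]
      field_simp
    have := congrArg norm hprod
    simp only [norm_mul] at this
    rw [← hconj] at this
    simp [hz, abs_of_pos Real.pi_pos] at this
    simp only [← hz] at this
    rw [pow_two]; linarith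
  have hpow : ‖(2 * Real.pi : ℂ) ^ (-(1 - z))‖ = (2 * Real.pi)⁻¹ := by
    have : (2 * Real.pi : ℂ) = ((2 * Real.pi : ℝ) : ℂ) := by push_cast; rfl
    rw [this, Complex.norm_cpow_eq_rpow_re_of_pos (by positivity)]
    simp [hz, Real.rpow_neg_one]
  rw [norm_mul, norm_mul, norm_mul, norm_mul, hpow, mul_pow]
  gcongr
  have hG2 : ‖Complex.Gamma (1 - z)‖ ^ 2 * (2 * ‖sh‖ * ‖sh‖) ≤ |t| * Real.pi := by
    rw [← hG]; gcongr
  have hpi := Real.pi_gt_three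
  simp only [Complex.norm_ofNat]
  calc (2 * (2 * Real.pi)⁻¹ * ‖Complex.Gamma (1 - z)‖ * ‖sh‖) ^ 2
      = (‖Complex.Gamma (1 - z)‖ ^ 2 * (2 * ‖sh‖ * ‖sh‖)) * (1 / (2 * Real.pi ^ 2)) := by
        field_simp
    _ ≤ (|t| * Real.pi) * (1 / (2 * Real.pi ^ 2)) := by gcongr
    _ = |t| * (1 / (2 * Real.pi)) := by field_simp
    _ ≤ |t| * 1 := by
        gcongr
        rw [div_le_one (by positivity)]; linarith
    _ = |t| := mul_one _

lemma zeta_imag_bound' {a : ℝ} (ha : 0 < a) : ∃ C : ℝ, 0 ≤ C ∧ ∀ t : ℝ, a ≤ |t| →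
    ‖riemannZeta (t * Complex.I)‖ ≤ C * |t| ^ (3 / 4 : ℝ) := by
  refine ⟨(5 + 1 / a + 4) * ((1 + 1 / a) ^ (1 / 4 : ℝ)), by positivity, fun t hat => ?_⟩
  have ht : t ≠ 0 := by rintro rfl; simp at hat; linarith
  have ht' : 0 < |t| := abs_pos.mpr ht
  have h1 := zeta_imag_bound ht
  have h2 := zeta_one_bound (τ := -t) (by simpa using ht)
  rw [abs_neg] at h2
  have h3 : Real.log (|t| + 1) ≤ 4 * (|t| + 1) ^ (1 / 4 : ℝ) := by
    have := Real.log_le_rpow_div (x := |t| + 1) (by positivity) (ε := 1 / 4) (by norm_num)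
    linarith
  have h4 : 1 ≤ (|t| + 1) ^ (1 / 4 : ℝ) := Real.one_le_rpow (by linarith) (by norm_num)
  have h5 : 1 / |t| ≤ 1 / a := by gcongr
  have h6 : (|t| + 1) ^ (1 / 4 : ℝ) ≤ (1 + 1 / a) ^ (1 / 4 : ℝ) * |t| ^ (1 / 4 : ℝ) := by
    rw [← Real.mul_rpow (by positivity) (by positivity)]
    apply Real.rpow_le_rpow (by positivity) _ (by norm_num)
    have : 1 ≤ 1 / a * |t| := by rw [one_div, ← div_eq_inv_mul, le_div_iff₀ ha]; linarith
    linarith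
  have h7 : ‖riemannZeta (1 + (-t : ℝ) * Complex.I)‖ ≤
      (5 + 1 / a + 4) * ((1 + 1 / a) ^ (1 / 4 : ℝ) * |t| ^ (1 / 4 : ℝ)) := by
    refine h2.trans ?_
    have h8 : 5 + 1 / |t| + Real.log (|t| + 1) ≤ (5 + 1 / a + 4) * (|t| + 1) ^ (1 / 4 : ℝ) := by
      have : 0 < 1 / a := by positivity
      nlinarith
    refine h8.trans ?_
    gcongr
  have h9 : ‖riemannZeta (t * Complex.I)‖ ≤
      |t| ^ (1 / 2 : ℝ) * ‖riemannZeta (1 + (-t : ℝ) * Complex.I)‖ := by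
    refine le_of_sq_le_sq ?_ (by positivity)
    rw [mul_pow, ← Real.sqrt_eq_rpow, Real.sq_sqrt ht'.le]
    exact h1
  refine h9.trans ?_
  calc _ ≤ |t| ^ (1 / 2 : ℝ) *
      ((5 + 1 / a + 4) * ((1 + 1 / a) ^ (1 / 4 : ℝ) * |t| ^ (1 / 4 : ℝ))) := by gcongr
    _ = (5 + 1 / a + 4) * ((1 + 1 / a) ^ (1 / 4 : ℝ)) * (|t| ^ (1 / 2 : ℝ) * |t| ^ (1 / 4 : ℝ)) := by
      ring
    _ = _ := by rw [← Real.rpow_add ht']; norm_num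

lemma two_mul_sum_div (q : ℕ) (n : ℕ) :
    2 * ∑ m ∈ Finset.range n, ((m / q : ℕ) : ℝ) =
      2 * ((n / q : ℕ) : ℝ) * n - q * ((n / q : ℕ) : ℝ) ^ 2 - q * ((n / q : ℕ) : ℝ) := by
  induction n with
  | zero => simp
  | succ n ih =>
    rw [Finset.sum_range_succ, mul_add, ih, Nat.succ_div]
    split_ifs with h
    · have h1 : q * ((n + 1) / q) = n + 1 := Nat.mul_div_cancel' h
      rw [Nat.succ_div, if_pos h] at h1
      have h2 : (q : ℝ) * (((n / q : ℕ) : ℝ) + 1) = n + 1 := by exact_mod_cast h1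
      push_cast
      linear_combination 2 * h2
    · push_cast
      ring

lemma sum_div_eq (q : ℕ) (hq : 0 < q) (n : ℕ) :
    ((∑ m ∈ Finset.range n, m / q : ℕ) : ℝ) =
      (n : ℝ) ^ 2 / (2 * q) - n / 2 - q * Bf (n / q) := by
  have h := two_mul_sum_div q n
  have h' : 2 * ((∑ m ∈ Finset.range n, m / q : ℕ) : ℝ) =
      2 * ((n / q : ℕ) : ℝ) * n - q * ((n / q : ℕ) : ℝ) ^ 2 - q * ((n / q : ℕ) : ℝ) := by
    rw [← h, Nat.cast_sum]
  have hf : Int.fract ((n : ℝ) / q) = n / q - ((n / q : ℕ) : ℝ) := by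
    have : ⌊(n : ℝ) / q⌋ = ((n / q : ℕ) : ℤ) := by
      rw [← Nat.floor_div_eq_div (K := ℝ) n q, Int.natCast_floor_eq_floor (by positivity)]
    rw [Int.fract, this, Int.cast_natCast]
  have hq' : (q : ℝ) ≠ 0 := by positivity
  unfold Bf
  rw [hf]
  field_simp
  linear_combination (q : ℝ) * h'

lemma digit_formula (b : ℕ) (hb : 2 ≤ b) (m R : ℕ) (hR : m < b ^ R) :
    (digitSum b m : ℝ) = m - (b - 1) * ∑ r ∈ Finset.range R, ((m / b ^ (r + 1) : ℕ) : ℝ) := by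
  have h1 := Nat.sub_one_mul_sum_log_div_pow_eq_sub_sum_digits (p := b) m
  have hsub : ∑ i ∈ Finset.range (Nat.log b m).succ, m / b ^ (i + 1) =
      ∑ i ∈ Finset.range R, m / b ^ (i + 1) := by
    have key : ∀ K M : ℕ, m < b ^ K → ∑ i ∈ Finset.range (K + M), m / b ^ (i + 1) =
        ∑ i ∈ Finset.range K, m / b ^ (i + 1) := by
      intro K M hK
      rw [Finset.sum_range_add, Nat.add_eq_left]
      apply Finset.sum_eq_zero
      intro i _
      apply Nat.div_eq_of_lt
      exact hK.trans_le (Nat.pow_le_pow_right (by omega) (by omega))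
    rw [← key _ R (Nat.lt_pow_succ_log_self (by omega) m), ← key R (Nat.log b m).succ hR, add_comm]
  have h2 : (Nat.digits b m).sum ≤ m := Nat.digit_sum_le b m
  simp only [Nat.succ_eq_add_one] at h1 hsub
  rw [hsub] at h1
  unfold digitSum
  have h3 : (b - 1) * ∑ i ∈ Finset.range R, m / b ^ (i + 1) + (Nat.digits b m).sum = m := by omega
  have h4 := congrArg (Nat.cast : ℕ → ℝ) h3
  rw [Nat.cast_add, Nat.cast_mul, Nat.cast_sub (by omega), Nat.cast_sum] at h4
  push_cast at h4 ⊢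
  linarith

lemma cum_formula (b : ℕ) (hb : 2 ≤ b) (n : ℕ) :
    HasSum (fun r : ℕ => ((b : ℝ) ^ (r + 1) * Bf (n / (b : ℝ) ^ (r + 1)) + n / 2) * (b - 1))
      (cumDigitSum b n + n / 2) := by
  have hb' : (1 : ℝ) < b := by exact_mod_cast hb
  have hb0 : (0 : ℝ) < b := by linarith
  have hnR : n < b ^ n := Nat.lt_pow_self (by omega)
  have h1 : HasSum (fun r : ℕ => ((∑ m ∈ Finset.range n, m / b ^ (r + 1) : ℕ) : ℝ))
      (∑ r ∈ Finset.range n, ((∑ m ∈ Finset.range n, m / b ^ (r + 1) : ℕ) : ℝ)) := by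
    apply hasSum_sum_of_ne_finset_zero
    intro r hr
    norm_cast
    apply Finset.sum_eq_zero
    intro m hm
    apply Nat.div_eq_of_lt
    simp only [Finset.mem_range] at hr hm
    calc m < b ^ n := by omega
      _ ≤ _ := Nat.pow_le_pow_right (by omega) (by omega)
  have h2 : (cumDigitSum b n : ℝ) = n * (n - 1) / 2 - (b - 1) *
      ∑ r ∈ Finset.range n, ((∑ m ∈ Finset.range n, m / b ^ (r + 1) : ℕ) : ℝ) := by
    unfold cumDigitSum
    push_cast
    rw [Finset.sum_comm, Finset.mul_sum]
    have : ∀ m ∈ Finset.range n, (digitSum b m : ℝ) =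
        m - (b - 1) * ∑ r ∈ Finset.range n, ((m / b ^ (r + 1) : ℕ) : ℝ) := by
      intro m hm
      exact digit_formula b hb m n (by simp at hm; omega)
    rw [Finset.sum_congr rfl this, Finset.sum_sub_distrib]
    congr 1
    clear * -
    induction n with
    | zero => simp
    | succ n ih => rw [Finset.sum_range_succ, ih]; push_cast; ring
  have h3 : HasSum (fun r : ℕ => (n : ℝ) ^ 2 / 2 * ((b : ℝ) ^ (r + 1))⁻¹)
      ((n : ℝ) ^ 2 / 2 * ((b : ℝ) - 1)⁻¹) := by
    apply HasSum.mul_left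
    have := (hasSum_geometric_of_lt_one (r := (b : ℝ)⁻¹) (by positivity)
      (inv_lt_one_of_one_lt₀ hb')).mul_left (b : ℝ)⁻¹
    convert! this using 1
    · ext r; rw [pow_succ, mul_inv, inv_pow]; ring
    · have : (b : ℝ) - 1 ≠ 0 := by linarith
      field_simp
  have h4 := (h3.sub h1).mul_right ((b : ℝ) - 1)
  convert! h4 using 1
  · ext r
    have := sum_div_eq (b ^ (r + 1)) (by positivity) n
    rw [this]
    push_cast
    have : (b : ℝ) ^ (r + 1) ≠ 0 := by positivity
    field_simp
    ring
  · have : (b : ℝ) - 1 ≠ 0 := by linarith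
    rw [h2]
    field_simp
    ring

def hh (y : ℝ) : ℝ := max 0 (min 1 (1 + y))

lemma hh_hasSum {x : ℝ} (hx : 0 ≤ x) : HasSum (fun r : ℕ => hh (x - (r + 1))) x := by
  have key : ∀ M : ℕ, ∑ r ∈ Finset.range M, hh (x - (r + 1)) = min x M := by
    intro M
    induction M with
    | zero => simp [hx]
    | succ M ih =>
      rw [Finset.sum_range_succ, ih, hh]
      push_cast
      grind
  obtain ⟨M, hM⟩ := exists_nat_ge x
  have h := hasSum_sum_of_ne_finset_zero (f := fun r : ℕ => hh (x - (r + 1)))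
    (s := Finset.range M) (L := SummationFilter.unconditional ℕ) ?_
  · rw [key M, min_eq_left hM] at h
    exact h
  · intro r hr
    simp at hr
    have : (M : ℝ) ≤ r := by exact_mod_cast hr
    unfold hh
    rw [max_eq_left]
    apply min_le_of_right_le
    linarith

/-- The function to which Poisson summation is applied. -/
def psi (b : ℝ) (y : ℝ) : ℝ := Bf (b ^ y) / b ^ y + (1 - hh y) / 2

lemma psi_hasSum (b : ℕ) (hb : 2 ≤ b) (n : ℕ) (hn : 1 ≤ n) :
    HasSum (fun m : ℤ => psi b (Real.log n / Real.log b + m))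
      ((cumDigitSum b n / n + 1 / 2) / (b - 1) - (Real.log n / Real.log b) / 2) := by
  have hb' : (1 : ℝ) < b := by exact_mod_cast hb
  have hb0 : (0 : ℝ) < b := by linarith
  have hn0 : (0 : ℝ) < n := by exact_mod_cast hn
  have hlb : 0 < Real.log b := Real.log_pos hb'
  set x := Real.log n / Real.log b with hx
  have hx0 : 0 ≤ x := div_nonneg (Real.log_nonneg (by exact_mod_cast hn)) hlb.le
  have hbx : (b : ℝ) ^ x = n := by
    rw [Real.rpow_def_of_pos hb0, hx, mul_div_cancel₀ _ hlb.ne', Real.exp_log hn0]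
  have h1 : HasSum (fun m : ℕ => psi b (x + (m : ℤ))) 0 := by
    convert! hasSum_zero using 1
    ext m
    unfold psi
    have : (b : ℝ) ^ (x + (m : ℤ)) = ((n * b ^ m : ℕ) : ℝ) := by
      rw [Real.rpow_add hb0, hbx]; simp
    rw [this, Bf_nat]
    have : hh (x + (m : ℤ)) = 1 := by
      have hm : (0 : ℝ) ≤ m := by positivity
      unfold hh
      push_cast
      rw [min_eq_left (by linarith)]; simp
    rw [this]; simp
  have h2 : HasSum (fun m : ℕ => psi b (x + (-((m : ℤ) + 1) : ℤ)))
      ((cumDigitSum b n / n + 1 / 2) / (b - 1) - x / 2) := by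
    have c1 := (cum_formula b hb n).mul_right ((b - 1 : ℝ)⁻¹ * (n : ℝ)⁻¹)
    have c2 := (hh_hasSum hx0).mul_right (1 / 2 : ℝ)
    have hb1 : (b : ℝ) - 1 ≠ 0 := by linarith
    convert! c1.sub c2 using 1
    · ext m
      unfold psi
      have e1 : (b : ℝ) ^ (x + (-((m : ℤ) + 1) : ℤ)) = n / (b : ℝ) ^ (m + 1) := by
        rw [Real.rpow_add hb0, hbx, Real.rpow_intCast, zpow_neg, div_eq_mul_inv]
        norm_cast
      have e2 : x + (-((m : ℤ) + 1) : ℤ) = x - (m + 1) := by push_cast; ring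
      rw [e1, e2]
      field_simp
      ring
    · field_simp
  have := HasSum.of_nat_of_neg_add_one (f := fun m : ℤ => psi b (x + m)) h1 h2
  simpa using this

lemma hh_cont : Continuous hh := by unfold hh; fun_prop

lemma hh_of_nonneg {y : ℝ} (hy : 0 ≤ y) : hh y = 1 := by unfold hh; grind

lemma hh_of_le {y : ℝ} (hy : y ≤ -1) : hh y = 0 := by unfold hh; grind

lemma hh_of_mem {y : ℝ} (hy : -1 ≤ y) (hy' : y ≤ 0) : hh y = 1 + y := by unfold hh; grind

lemma psi_cont {b : ℝ} (hb : 1 < b) : Continuous (psi b) := by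
  have h0 : 0 < b := by linarith
  have h1 : Continuous fun y : ℝ => b ^ y := Real.continuous_const_rpow h0.ne'
  have h2 : ∀ y : ℝ, b ^ y ≠ 0 := fun y => (Real.rpow_pos_of_pos h0 y).ne'
  have h3 := hh_cont
  unfold psi
  exact ((Bf_cont.comp h1).div h1 h2).add ((continuous_const.sub h3).div_const 2)

lemma psi_of_nonneg {b y : ℝ} (hy : 0 ≤ y) : psi b y = Bf (b ^ y) / b ^ y := by
  rw [psi, hh_of_nonneg hy]; simp

lemma psi_of_nonpos {b y : ℝ} (hb : 1 < b) (hy : y ≤ 0) : psi b y = b ^ y / 2 - hh y / 2 := by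
  have h0 : 0 < b := by linarith
  have h1 : 0 < b ^ y := Real.rpow_pos_of_pos h0 y
  have h2 : b ^ y ≤ 1 := Real.rpow_le_one_of_one_le_of_nonpos hb.le hy
  have := Bf_of_mem' (N := 0) (t := b ^ y) (by simpa using h1.le) (by simpa using h2)
  rw [psi, this]
  simp
  field_simp
  ring

lemma exp_bound {c y : ℝ} (hc : 0 < c) (hy : 0 ≤ y) :
    Real.exp (-(c * y)) ≤ (1 + 2 / c ^ 2) * (1 + y ^ 2)⁻¹ := by
  have h := Real.quadratic_le_exp_of_nonneg (x := c * y) (by positivity)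
  rw [Real.exp_neg, ← div_eq_mul_inv, le_div_iff₀ (by positivity), inv_mul_le_iff₀ (by positivity)]
  calc 1 + y ^ 2 ≤ (1 + c * y + (c * y) ^ 2 / 2) * (1 + 2 / c ^ 2) := by
        have e : (c * y) ^ 2 / 2 * (2 / c ^ 2) = y ^ 2 := by field_simp
        have : 0 ≤ 2 / c ^ 2 := by positivity
        have : 0 ≤ c * y := by positivity
        have : 0 ≤ c * y * (2 / c ^ 2) := by positivity
        nlinarith [sq_nonneg (c * y)]
    _ ≤ _ := by gcongr

lemma psi_bound {b : ℝ} (hb : 1 < b) : ∃ C : ℝ, ∀ y, |psi b y| ≤ C * (1 + y ^ 2)⁻¹ := by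
  have h0 : 0 < b := by linarith
  have hl : 0 < Real.log b := Real.log_pos hb
  refine ⟨(1 + 2 / (Real.log b) ^ 2) + 2, fun y => ?_⟩
  rw [add_mul]
  have hp : 0 < 2 * (1 + y ^ 2)⁻¹ := by positivity
  rcases le_total 0 y with hy | hy
  · rw [psi_of_nonneg hy, abs_div, abs_of_pos (Real.rpow_pos_of_pos h0 y)]
    have h1 := exp_bound hl hy
    have h2 : |Bf (b ^ y)| / b ^ y ≤ 1 / b ^ y := by
      gcongr; exact Bf_abs_le _
    have h3 : 1 / b ^ y = Real.exp (-(Real.log b * y)) := by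
      rw [Real.rpow_def_of_pos h0, Real.exp_neg, one_div]
    linarith
  · rw [psi_of_nonpos hb hy]
    have h1 := exp_bound hl (neg_nonneg.mpr hy)
    rw [neg_sq] at h1
    have h3 : b ^ y = Real.exp (-(Real.log b * -y)) := by
      rw [Real.rpow_def_of_pos h0]; congr 1; ring
    rw [← h3] at h1
    have h4 : 0 < b ^ y := Real.rpow_pos_of_pos h0 y
    have h5 : 0 ≤ hh y := le_max_left _ _
    have h6 : hh y ≤ 2 * (1 + y ^ 2)⁻¹ := by
      rcases le_total y (-1) with h | h
      · rw [hh_of_le h]; exact hp.le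
      · rw [hh_of_mem h hy, ← div_eq_mul_inv, le_div_iff₀ (by positivity)]
        nlinarith
    rw [abs_le]
    constructor <;> linarith

lemma psi_isBigO {b : ℝ} (hb : 1 < b) :
    (fun y => (psi b y : ℂ)) =O[cocompact ℝ] (fun x : ℝ => |x| ^ (-2 : ℝ)) := by
  obtain ⟨C, hC⟩ := psi_bound hb
  refine Asymptotics.IsBigO.of_bound C ?_
  filter_upwards [(tendsto_norm_cocompact_atTop (E := ℝ)).eventually_ge_atTop 1] with y hy
  rw [Real.norm_eq_abs] at hy
  have hy0 : 0 < |y| := by linarith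
  have hC0 : 0 ≤ C := by
    have := (abs_nonneg _).trans (hC 0)
    simpa using this
  have e : |y| ^ (-2 : ℝ) = (y ^ 2)⁻¹ := by
    rw [Real.rpow_neg hy0.le, show (2 : ℝ) = (2 : ℕ) by norm_num, Real.rpow_natCast, sq_abs]
  rw [Complex.norm_real, Real.norm_eq_abs, e, Real.norm_eq_abs,
    abs_of_nonneg (show (0 : ℝ) ≤ (y ^ 2)⁻¹ by positivity)]
  refine (hC y).trans ?_
  have : 0 < y ^ 2 := by rw [← sq_abs]; positivity
  gcongr
  linarith

lemma psi_integrand {b : ℝ} (hb : 1 < b) (k : ℝ) :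
    Integrable (fun y : ℝ => Complex.exp (-2 * Real.pi * Complex.I * k * y) * (psi b y : ℂ)) := by
  obtain ⟨C, hC⟩ := psi_bound hb
  have h1 := psi_cont hb
  refine (integrable_inv_one_add_sq.const_mul C).mono' ?_ ?_
  · have : Continuous (fun y : ℝ => Complex.exp (-2 * Real.pi * Complex.I * k * y) * (psi b y : ℂ)) := by
      fun_prop
    exact this.aestronglyMeasurable
  · refine Eventually.of_forall fun y => ?_
    rw [norm_mul, Complex.norm_exp]
    simpa using hC y

lemma psi_Ioi {b : ℝ} (hb : 1 < b) (k : ℝ) :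
    ∫ y in Ioi (0 : ℝ), Complex.exp (-2 * Real.pi * Complex.I * k * y) * (psi b y : ℂ) =
      II 1 (2 * Real.pi * Complex.I * k / Real.log b) / Real.log b := by
  have h0 : 0 < b := by linarith
  have hl : 0 < Real.log b := Real.log_pos hb
  have hlc : (Real.log b : ℂ) ≠ 0 := by exact_mod_cast hl.ne'
  have himg : (fun y : ℝ => b ^ y) '' Ioi 0 = Ioi 1 := by
    ext t
    simp only [mem_image, mem_Ioi]
    constructor
    · rintro ⟨y, hy, rfl⟩
      exact Real.one_lt_rpow hb hy
    · intro ht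
      refine ⟨Real.log t / Real.log b, div_pos (Real.log_pos ht) hl, ?_⟩
      rw [Real.rpow_def_of_pos h0, mul_div_cancel₀ _ hl.ne', Real.exp_log (by linarith)]
  have hd : ∀ y ∈ Ioi (0 : ℝ), HasDerivWithinAt (fun y : ℝ => b ^ y)
      (Real.log b * b ^ y) (Ioi 0) y := by
    intro y _
    have := (Real.hasStrictDerivAt_const_rpow h0 y).hasDerivAt.hasDerivWithinAt (s := Ioi 0)
    rwa [mul_comm] at this
  have hinj : InjOn (fun y : ℝ => b ^ y) (Ioi 0) := by
    intro x _ y _ hxy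
    exact (Real.strictMono_rpow_of_base_gt_one hb).injective hxy
  unfold II
  rw [Nat.cast_one, ← himg,
    integral_image_eq_integral_abs_deriv_smul measurableSet_Ioi hd hinj,
    ← integral_div]
  refine setIntegral_congr_fun measurableSet_Ioi fun y hy => ?_
  have hy' : (0 : ℝ) < y := hy
  have hby : 0 < b ^ y := Real.rpow_pos_of_pos h0 y
  rw [psi_of_nonneg hy'.le, abs_of_pos (by positivity)]
  have e1 : (b ^ y : ℝ) = Real.exp (Real.log b * y) := Real.rpow_def_of_pos h0 y
  have e2 : ((b ^ y : ℝ) : ℂ) ≠ 0 := by exact_mod_cast hby.ne'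
  have e3 : ((b ^ y : ℝ) : ℂ) ^ (-(2 * Real.pi * Complex.I * k / Real.log b) - 2) =
      Complex.exp (-2 * Real.pi * Complex.I * k * y) / (((b ^ y : ℝ) : ℂ) * ((b ^ y : ℝ) : ℂ)) := by
    rw [Complex.cpow_sub _ _ e2, Complex.cpow_ofNat, pow_two, Complex.cpow_def_of_ne_zero e2,
      ← Complex.ofReal_log hby.le]
    congr 2
    rw [e1, Real.log_exp]
    push_cast
    field_simp
  rw [e3, Complex.real_smul]
  push_cast
  field_simp

lemma psi_Iic {b : ℝ} (hb : 1 < b) (k : ℝ) :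
    ∫ y in Iic (0 : ℝ), Complex.exp (-2 * Real.pi * Complex.I * k * y) * (psi b y : ℂ) =
      1 / (2 * (Real.log b - 2 * Real.pi * Complex.I * k)) -
      (∫ y in (-1 : ℝ)..0, Complex.exp (-2 * Real.pi * Complex.I * k * y) * (1 + y)) / 2 := by
  have h0 : 0 < b := by linarith
  have hl : 0 < Real.log b := Real.log_pos hb
  set a : ℂ := Real.log b - 2 * Real.pi * Complex.I * k with ha
  have hare : 0 < a.re := by simp [ha]; exact hl
  have e1 : ∀ y ∈ Iic (0 : ℝ), Complex.exp (-2 * Real.pi * Complex.I * k * y) * (psi b y : ℂ) =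
      Complex.exp (a * y) / 2 - (Ioc (-1 : ℝ) 0).indicator (fun y : ℝ =>
        Complex.exp (-2 * Real.pi * Complex.I * k * y) * (1 + y) / 2) y := by
    intro y hy
    have hy' : y ≤ 0 := hy
    rw [psi_of_nonpos hb hy']
    have e : Complex.exp (a * y) =
        Complex.exp (-2 * Real.pi * Complex.I * k * y) * ((b ^ y : ℝ) : ℂ) := by
      rw [Real.rpow_def_of_pos h0, Complex.ofReal_exp, ← Complex.exp_add]
      congr 1
      rw [ha]; push_cast; ring
    rw [e]
    by_cases h : y ∈ Ioc (-1 : ℝ) 0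
    · rw [indicator_of_mem h, hh_of_mem h.1.le h.2]
      push_cast; ring
    · have : y ≤ -1 := by
        by_contra hc
        exact h ⟨not_le.mp hc, hy'⟩
      rw [indicator_of_notMem h, hh_of_le this]
      push_cast; ring
  rw [setIntegral_congr_fun measurableSet_Iic e1, integral_sub]
  · rw [integral_div, integral_exp_mul_complex_Iic hare, setIntegral_indicator measurableSet_Ioc]
    have : Iic (0 : ℝ) ∩ Ioc (-1) 0 = Ioc (-1) 0 := by
      ext x; simp
    rw [this, ← intervalIntegral.integral_of_le (by norm_num), intervalIntegral.integral_div]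
    congr 1
    simp
    ring
  · exact (integrableOn_exp_mul_complex_Iic hare 0).div_const 2
  · refine Integrable.restrict (μ := volume) ?_
    rw [integrable_indicator_iff measurableSet_Ioc]
    have : Continuous (fun y : ℝ =>
        Complex.exp (-2 * Real.pi * Complex.I * k * y) * (1 + (y : ℂ)) / 2) := by fun_prop
    exact this.integrableOn_Ioc

open FourierTransform in
lemma psi_fourier {b : ℝ} (hb : 1 < b) (k : ℝ) :
    𝓕 (fun y => (psi b y : ℂ)) k = 1 / (2 * (Real.log b - 2 * Real.pi * Complex.I * k)) -
      (∫ y in (-1 : ℝ)..0, Complex.exp (-2 * Real.pi * Complex.I * k * y) * (1 + y)) / 2 +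
      II 1 (2 * Real.pi * Complex.I * k / Real.log b) / Real.log b := by
  rw [← psi_Iic hb, ← psi_Ioi hb, ← setIntegral_union (by simp) measurableSet_Ioi
    (psi_integrand hb k).integrableOn (psi_integrand hb k).integrableOn, Iic_union_Ioi,
    setIntegral_univ, Real.fourier_real_eq_integral_exp_smul]
  congr 1
  ext y
  rw [smul_eq_mul]
  congr 2
  push_cast
  ring

lemma int_ne {k : ℤ} (hk : k ≠ 0) :
    ∫ y in (-1 : ℝ)..0, Complex.exp (-2 * Real.pi * Complex.I * (k : ℝ) * y) * (1 + y) =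
      1 / (-2 * Real.pi * Complex.I * k) := by
  set w : ℂ := -2 * Real.pi * Complex.I * k with hw
  have hw0 : w ≠ 0 := by simp [hw, hk, Real.pi_ne_zero]
  have hc : ((k : ℝ) : ℂ) = k := by simp
  rw [hc, ← hw]
  have hexp : Complex.exp (w * ((-1 : ℝ) : ℂ)) = 1 := by
    rw [← Complex.exp_int_mul_two_pi_mul_I k]
    congr 1
    rw [hw]; push_cast; ring
  rw [intervalIntegral.integral_eq_sub_of_hasDerivAt
    (f := fun y : ℝ => Complex.exp (w * y) * ((1 + y) / w - 1 / w ^ 2))]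
  · rw [hexp]
    simp
  · intro y _
    have h1 : HasDerivAt (fun y : ℝ => (y : ℂ)) 1 y := Complex.ofRealCLM.hasDerivAt
    have h2 := ((h1.const_mul w).cexp).mul (((h1.const_add 1).div_const w).sub_const (1 / w ^ 2))
    convert! h2 using 1
    field_simp
    ring
  · exact Continuous.intervalIntegrable (by fun_prop) _ _

lemma int_zero :
    ∫ y in (-1 : ℝ)..0, Complex.exp (-2 * Real.pi * Complex.I * (0 : ℝ) * y) * (1 + y) = 1 / 2 := by
  rw [intervalIntegral.integral_eq_sub_of_hasDerivAt
    (f := fun y : ℝ => ((y : ℂ) + y * y / 2))]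
  · norm_num
  · intro y _
    have h1 : HasDerivAt (fun y : ℝ => (y : ℂ)) 1 y := Complex.ofRealCLM.hasDerivAt
    convert! h1.add ((h1.mul h1).div_const 2) using 1
    simp
  · exact Continuous.intervalIntegrable (by fun_prop) _ _

open FourierTransform in
lemma coeff_eq {b : ℝ} (hb : 1 < b) (k : ℤ) :
    delangeCoeff b k = (b - 1) * 𝓕 (fun y => (psi b y : ℂ)) (k : ℝ) -
      (if k = 0 then 1 / 2 else 0) := by
  have hl : 0 < Real.log b := Real.log_pos hb
  have hlc : (Real.log b : ℂ) ≠ 0 := by exact_mod_cast hl.ne'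
  rw [psi_fourier hb, delangeCoeff]
  split_ifs with hk
  · subst hk
    rw [Int.cast_zero, int_zero]
    simp only [Complex.ofReal_zero, mul_zero, zero_div, sub_zero]
    rw [II_zero]
    field_simp
    ring
  · rw [int_ne hk]
    have hc : ((k : ℝ) : ℂ) = k := by simp
    rw [hc]
    set s : ℂ := 2 * Real.pi * Complex.I * k / Real.log b with hs
    have hks : 2 * Real.pi * Complex.I * k = Real.log b * s := by rw [hs]; field_simp
    have hsI : s = ((2 * Real.pi * k / Real.log b : ℝ) : ℂ) * Complex.I := by
      rw [hs]; push_cast; ring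
    have hre : s.re = 0 := by rw [hsI]; simp
    have hs0 : s ≠ 0 := by
      rw [hs]; simp [hk, Real.pi_ne_zero]
      have := hl.ne'
      simpa using this
    have hs1 : s - 1 ≠ 0 := by
      intro h
      have := congrArg Complex.re h
      simp [hre] at this
    have hs2 : 1 + s ≠ 0 := by
      intro h
      have := congrArg Complex.re h
      simp [hre] at this
    have hs3 : 1 - s ≠ 0 := by
      intro h
      have := congrArg Complex.re h
      simp [hre] at this
    have hII := II_eq (s := s) (by rw [hre]; norm_num) (sub_ne_zero.mp hs1)
    have hII' : riemannZeta s = 1 / (s - 1) + 1 / 2 - s * (s + 1) * II 1 s := by rw [hII]; ring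
    rw [hII', show -2 * Real.pi * Complex.I * k = -(2 * Real.pi * Complex.I * k) by ring, hks,
      show (Real.log b : ℂ) - Real.log b * s = Real.log b * (1 - s) by ring]
    field_simp
    ring

lemma coeff_summable {b : ℝ} (hb : 1 < b) : Summable (fun k : ℤ => ‖delangeCoeff b k‖) := by
  have hl : 0 < Real.log b := Real.log_pos hb
  have hpi := Real.pi_pos
  set a : ℝ := 2 * Real.pi / Real.log b with ha
  have ha0 : 0 < a := by positivity
  obtain ⟨C, hC0, hC⟩ := zeta_imag_bound' ha0
  set D : ℝ := (b - 1) / (2 * Real.pi) * a⁻¹ * (C * a ^ (3 / 4 : ℝ)) with hD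
  have hsum := (Real.summable_abs_int_rpow (b := 5 / 4) (by norm_num)).mul_left D
  refine Summable.of_norm_bounded_eventually hsum ?_
  have : ∀ᶠ k : ℤ in cofinite, k ≠ 0 := by
    rw [eventually_cofinite]
    simp
  filter_upwards [this] with k hk
  rw [norm_norm, delangeCoeff, if_neg hk]
  have hk1 : (1 : ℝ) ≤ |(k : ℝ)| := by exact_mod_cast Int.one_le_abs hk
  have hk0 : (0 : ℝ) < |(k : ℝ)| := by linarith
  have hsI : 2 * Real.pi * Complex.I * k / Real.log b = ((a * k : ℝ) : ℂ) * Complex.I := by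
    rw [ha]; push_cast; ring
  rw [hsI]
  have habs : |a * k| = a * |(k : ℝ)| := by rw [abs_mul, abs_of_pos ha0]
  have z1 := hC (a * k) (by rw [habs]; nlinarith)
  rw [habs, Real.mul_rpow ha0.le hk0.le] at z1
  have z2 : ‖(1 + ((a * k : ℝ) : ℂ) * Complex.I)⁻¹‖ ≤ a⁻¹ * |(k : ℝ)|⁻¹ := by
    rw [norm_inv, ← mul_inv]
    apply inv_anti₀ (by positivity)
    have := Complex.abs_im_le_norm (1 + ((a * k : ℝ) : ℂ) * Complex.I)
    simp only [Complex.add_im, Complex.one_im, Complex.mul_I_im, Complex.ofReal_re, zero_add] at this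
    rwa [habs] at this
  have z3 : ‖-(((b : ℂ) - 1) / (2 * Real.pi * Complex.I * k))‖ =
      (b - 1) / (2 * Real.pi) * |(k : ℝ)|⁻¹ := by
    rw [norm_neg, norm_div]
    have : ‖(b : ℂ) - 1‖ = b - 1 := by
      rw [← Complex.ofReal_one, ← Complex.ofReal_sub, Complex.norm_real, Real.norm_eq_abs,
        abs_of_pos (by linarith)]
    rw [this]
    simp [abs_of_pos hpi]
    field_simp
  rw [norm_mul, norm_mul, z3]
  have e : |(k : ℝ)| ^ (-(5 / 4) : ℝ) = |(k : ℝ)|⁻¹ * |(k : ℝ)|⁻¹ * |(k : ℝ)| ^ (3 / 4 : ℝ) := by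
    rw [← Real.rpow_neg_one, ← Real.rpow_add hk0, ← Real.rpow_add hk0]
    norm_num
  have hb1 : 0 ≤ (b - 1) / (2 * Real.pi) := div_nonneg (by linarith) (by positivity)
  calc _ ≤ (b - 1) / (2 * Real.pi) * |(k : ℝ)|⁻¹ * (a⁻¹ * |(k : ℝ)|⁻¹) *
        (C * (a ^ (3 / 4 : ℝ) * |(k : ℝ)| ^ (3 / 4 : ℝ))) := by gcongr
    _ = _ := by rw [hD, e]; ring

end DelangeAux

theorem delange_formula (b : ℕ) (hb : 2 ≤ b) (n : ℕ) (hn : 1 ≤ n) :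
    Summable (fun k : ℤ => ‖delangeCoeff b k *
      Complex.exp (2 * Real.pi * Complex.I * k * (Real.log n / Real.log b))‖) ∧
    (cumDigitSum b n : ℂ) =
      (((b : ℂ) - 1) / (2 * Real.log b)) * n * Real.log n +
        (n : ℂ) * ∑' k : ℤ, delangeCoeff b k *
          Complex.exp (2 * Real.pi * Complex.I * k * (Real.log n / Real.log b)) := by
  have hb' : (1 : ℝ) < b := by exact_mod_cast hb
  have hn0 : (n : ℂ) ≠ 0 := by exact_mod_cast (by omega : n ≠ 0)
  have hb1 : (b : ℂ) - 1 ≠ 0 := by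
    rw [sub_ne_zero]; exact_mod_cast (by omega : b ≠ 1)
  have hl : 0 < Real.log b := Real.log_pos hb'
  have hlc : (Real.log b : ℂ) ≠ 0 := by exact_mod_cast hl.ne'
  set x : ℝ := Real.log n / Real.log b with hx
  have hnorm : ∀ k : ℤ, ‖Complex.exp (2 * Real.pi * Complex.I * k *
      (Real.log n / Real.log b))‖ = 1 := by
    intro k
    rw [show (2 * Real.pi * Complex.I * k * (Real.log n / Real.log b) : ℂ) =
      ((2 * Real.pi * k * (Real.log n / Real.log b) : ℝ) : ℂ) * Complex.I by push_cast; ring]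
    exact Complex.norm_exp_ofReal_mul_I _
  have hs1 : Summable (fun k : ℤ => ‖delangeCoeff b k *
      Complex.exp (2 * Real.pi * Complex.I * k * (Real.log n / Real.log b))‖) := by
    simp_rw [norm_mul, hnorm, mul_one]
    exact DelangeAux.coeff_summable hb'
  refine ⟨hs1, ?_⟩
  set f : ℝ → ℂ := fun y => (DelangeAux.psi b y : ℂ) with hf
  have hcoef : ∀ k : ℤ, delangeCoeff b k = (((b : ℝ) : ℂ) - 1) *
      FourierTransform.fourier f (k : ℝ) - (if k = 0 then 1 / 2 else 0) :=
    DelangeAux.coeff_eq hb'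
  have hdelta : HasSum (fun k : ℤ => (if k = 0 then (1 / 2 : ℂ) else 0)) (1 / 2) :=
    hasSum_ite_eq 0 (1 / 2 : ℂ)
  have hFf : Summable fun k : ℤ => FourierTransform.fourier f (k : ℝ) := by
    have h1 : Summable (fun k : ℤ => delangeCoeff b k) := (DelangeAux.coeff_summable hb').of_norm
    refine ((h1.add hdelta.summable).mul_left (((b : ℂ) - 1)⁻¹)).congr fun k => ?_
    rw [hcoef k]
    push_cast
    field_simp
    ring
  have hP := Real.tsum_eq_tsum_fourier_of_rpow_decay_of_summable (f := f)
    (Complex.continuous_ofReal.comp (DelangeAux.psi_cont hb')) (b := 2) (by norm_num)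
    (DelangeAux.psi_isBigO hb') hFf x
  have hfour : ∀ k : ℤ, fourier k (x : UnitAddCircle) =
      Complex.exp (2 * Real.pi * Complex.I * k * (Real.log n / Real.log b)) := by
    intro k
    rw [fourier_coe_apply, hx]
    congr 1
    push_cast
    ring
  simp_rw [hfour] at hP
  have hL : ∑' m : ℤ, f (x + m) =
      (((cumDigitSum b n / n + 1 / 2) / (b - 1) - x / 2 : ℝ) : ℂ) := by
    rw [← (DelangeAux.psi_hasSum b hb n hn).tsum_eq, Complex.ofReal_tsum]
  have hE : ∑' k : ℤ, delangeCoeff b k *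
      Complex.exp (2 * Real.pi * Complex.I * k * (Real.log n / Real.log b)) =
      ((b : ℂ) - 1) * ∑' m : ℤ, f (x + m) - 1 / 2 := by
    have hs2 : Summable (fun k : ℤ => FourierTransform.fourier f (k : ℝ) *
        Complex.exp (2 * Real.pi * Complex.I * k * (Real.log n / Real.log b))) := by
      apply Summable.of_norm
      simp_rw [norm_mul, hnorm, mul_one]
      exact hFf.norm
    rw [hP, ← tsum_mul_left, ← hdelta.tsum_eq, ← (hs2.mul_left _).tsum_sub hdelta.summable]
    congr 1
    ext k
    rw [hcoef k]
    by_cases hk : k = 0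
    · subst hk; simp
    · simp [hk]; ring
  rw [hE, hL, hx]
  push_cast
  field_simp
  ring
end
end

section
/- For every real β > 1 and every ε > 0 there exists a constant C > 0 such that |c_β(k)| ≤ C · |k|^{-3/2 + ε} for all nonzero k ∈ ℤ. -/
noncomputable section

open Complex

lemma aux_rpow (s : ℂ) (hs : 1 < s.re) (n : ℕ) (hn : 1 ≤ n) (x : ℝ) (hx : (n:ℝ) ≤ x) :
    ‖(x:ℂ) ^ (-s - 1)‖ ≤ 1 / (n:ℝ)^2 := by
  have hn' : (1:ℝ) ≤ n := by exact_mod_cast hn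
  have hx0 : 0 < x := by linarith
  rw [Complex.norm_cpow_eq_rpow_re_of_pos hx0]
  calc x ^ (-s - 1).re ≤ x ^ (-2:ℝ) := by
        apply Real.rpow_le_rpow_of_exponent_le (by linarith)
        simp; linarith
    _ = 1 / x^2 := by
        rw [Real.rpow_neg hx0.le]; norm_num
    _ ≤ 1 / (n:ℝ)^2 := by gcongr

lemma hasDeriv_cpow (r : ℂ) (hr : r ≠ 0) (x : ℝ) (hx : 0 < x) :
    HasDerivAt (fun y : ℝ => (y:ℂ) ^ r) (r * (x:ℂ) ^ (r - 1)) x := by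
  exact hasDerivAt_ofReal_cpow_const hx.ne' hr

lemma aux_diff (s : ℂ) (hs : 1 < s.re) (n : ℕ) (hn : 1 ≤ n) (x : ℝ)
    (hx : x ∈ Set.Icc (n:ℝ) (n+1)) :
    ‖(x:ℂ) ^ (-s) - ((n+1:ℝ):ℂ) ^ (-s)‖ ≤ ‖s‖ / (n:ℝ)^2 := by
  have hn' : (1:ℝ) ≤ n := by exact_mod_cast hn
  have hs0 : -s ≠ 0 := by
    intro h; rw [neg_eq_zero] at h; subst h; simp at hs; linarith
  have h := Convex.norm_image_sub_le_of_norm_hasDerivWithin_le (𝕜 := ℝ)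
    (f := fun y : ℝ => (y:ℂ) ^ (-s)) (f' := fun y : ℝ => -s * (y:ℂ) ^ (-s - 1))
    (s := Set.Icc (n:ℝ) (n+1)) (C := ‖s‖ / (n:ℝ)^2) (x := n+1) (y := x)
    (fun y hy => (hasDeriv_cpow (-s) hs0 y (by linarith [hy.1])).hasDerivWithinAt)
    (fun y hy => by
      rw [norm_mul, norm_neg, div_eq_mul_one_div]
      exact mul_le_mul_of_nonneg_left (aux_rpow s hs n hn y hy.1) (norm_nonneg _))
    (convex_Icc _ _) (by constructor <;> linarith) hx
  refine h.trans ?_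
  have : ‖x - (n+1)‖ ≤ 1 := by
    rw [Real.norm_eq_abs, abs_le]; constructor <;> linarith [hx.1, hx.2]
  exact mul_le_of_le_one_right (by positivity) this

lemma aux_term (s : ℂ) (hs : 1 < s.re) (n : ℕ) (hn : 1 ≤ n) :
    ‖1 / ((n:ℂ)+1) ^ s - (((n:ℂ)+1) ^ (1-s) / (1-s) - (n:ℂ) ^ (1-s) / (1-s))‖
      ≤ ‖s‖ / (n:ℝ)^2 := by
  have hn' : (1:ℝ) ≤ n := by exact_mod_cast hn
  have hs0 : 1 - s ≠ 0 := by
    intro h; rw [sub_eq_zero] at h; subst h; simp at hs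
  set c : ℂ := ((n+1:ℝ):ℂ) ^ (-s) with hc
  have h := Convex.norm_image_sub_le_of_norm_hasDerivWithin_le (𝕜 := ℝ)
    (f := fun y : ℝ => (y:ℂ) ^ (1-s) / (1-s) - y * c)
    (f' := fun y : ℝ => (y:ℂ) ^ (-s) - c)
    (s := Set.Icc (n:ℝ) (n+1)) (C := ‖s‖ / (n:ℝ)^2) (x := n) (y := n+1)
    (fun y hy => by
      have h1 := (hasDeriv_cpow (1-s) hs0 y (by linarith [hy.1])).div_const (1-s)
      have h2 := ((hasDerivAt_id y).ofReal_comp).mul_const c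
      have h3 := h1.sub h2
      refine (h3.congr_deriv ?_).hasDerivWithinAt
      rw [show 1 - s - 1 = -s by ring]; field_simp; simp)
    (fun y hy => aux_diff s hs n hn y hy)
    (convex_Icc _ _) (by constructor <;> linarith) (by constructor <;> linarith)
  simp only [add_sub_cancel_left, norm_one, mul_one] at h
  rw [norm_sub_rev]
  refine le_trans (le_of_eq ?_) h
  congr 1
  rw [hc, one_div, ← Complex.cpow_neg]
  push_cast
  ring

lemma telescope (u : ℕ → ℂ) (l : ℂ) (hu : Filter.Tendsto u Filter.atTop (nhds l))
    (hsum : Summable fun n => u (n+1) - u n) : HasSum (fun n => u (n+1) - u n) (l - u 0) := by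
  rw [hsum.hasSum_iff_tendsto_nat]
  simp_rw [Finset.sum_range_sub]
  exact hu.sub_const _

lemma telescope2 (N : ℕ) (hN : 1 ≤ N) :
    HasSum (fun m : ℕ => 2 / ((m:ℝ)+N) - 2/((m:ℝ)+1+N)) (2/N) := by
  have hN' : (1:ℝ) ≤ N := by exact_mod_cast hN
  rw [hasSum_iff_tendsto_nat_of_nonneg]
  · have := fun n => Finset.sum_range_sub' (fun m : ℕ => 2 / ((m:ℝ)+N)) n
    push_cast at this
    simp_rw [this]
    have h : Filter.Tendsto (fun m : ℕ => 2 / ((m:ℝ)+N)) Filter.atTop (nhds 0) :=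
      Filter.Tendsto.const_div_atTop
        (Filter.tendsto_atTop_add_const_right _ _ tendsto_natCast_atTop_atTop) _
    simpa using h.const_sub (2 / ((0:ℝ)+N))
  · intro m
    rw [sub_nonneg]
    gcongr; linarith

lemma zeta_approx (s : ℂ) (hs : 1 < s.re) (N : ℕ) (hN : 1 ≤ N) :
    ‖riemannZeta s‖ ≤ (1 + Real.log N) + 1 / ‖s - 1‖ + ‖s‖ * (2 / N) := by
  have hN' : (1:ℝ) ≤ N := by exact_mod_cast hN
  rw [zeta_eq_tsum_one_div_nat_add_one_cpow hs]
  have hsm : Summable fun n : ℕ => 1 / ((n:ℂ)+1) ^ s := by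
    have := (Complex.summable_one_div_nat_cpow (p := s)).2 hs
    have := (summable_nat_add_iff 1).2 this
    simpa using this
  rw [← hsm.sum_add_tsum_nat_add N]
  set F : ℕ → ℂ := fun m => ((m + N : ℕ):ℂ) ^ (1-s) / (1-s) with hF
  have hterm : ∀ m : ℕ, ‖1 / (((m+N:ℕ):ℂ)+1) ^ s - (F (m+1) - F m)‖ ≤
      ‖s‖ * (2 / ((m:ℝ)+N) - 2/((m:ℝ)+1+N)) := by
    intro m
    have h := aux_term s hs (m+N) (by omega)
    have e : (((m+1+N:ℕ):ℂ)) = ((m+N:ℕ):ℂ)+1 := by push_cast; ring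
    simp only [hF]
    rw [e]
    refine h.trans ?_
    rw [div_eq_mul_one_div]
    gcongr
    push_cast
    have hx : (1:ℝ) ≤ m + N := by have : (0:ℝ) ≤ m := by positivity
                                  linarith
    rw [show (m:ℝ)+1+N = (m+N)+1 by ring]
    generalize (m:ℝ)+N = x at hx
    rw [div_sub_div _ _ (by positivity) (by positivity), div_le_div_iff₀ (by positivity) (by positivity)]
    nlinarith
  have hT := (telescope2 N hN).mul_left ‖s‖
  have hs1 : Summable fun m : ℕ => 1 / (((m+N:ℕ):ℂ)+1) ^ s - (F (m+1) - F m) :=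
    Summable.of_norm_bounded hT.summable hterm
  have hs2 : Summable fun m : ℕ => 1 / (((m+N:ℕ):ℂ)+1) ^ s :=
    (summable_nat_add_iff N).2 hsm
  have hs3 : Summable fun m => F (m+1) - F m := by
    have := hs2.sub hs1
    simpa using this
  have hF0 : Filter.Tendsto F Filter.atTop (nhds 0) := by
    rw [tendsto_zero_iff_norm_tendsto_zero]
    have h1 : Filter.Tendsto (fun m : ℕ => ((m+N:ℕ):ℝ) ^ (-(s.re - 1)) / ‖1 - s‖) Filter.atTop (nhds 0) := by
      have := (tendsto_rpow_neg_atTop (y := s.re - 1) (by linarith)).comp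
        (tendsto_natCast_atTop_atTop.comp (Filter.tendsto_add_atTop_nat N))
      simpa using this.div_const ‖1 - s‖
    refine h1.congr fun m => ?_
    simp only [hF]
    rw [norm_div, Complex.norm_natCast_cpow_of_pos (by omega)]
    simp
  have hH := telescope F 0 hF0 hs3
  have hle1 := tsum_of_norm_bounded hT hterm
  rw [hs2.tsum_sub hs3, hH.tsum_eq] at hle1
  have hF0n : ‖F 0‖ ≤ 1 / ‖s - 1‖ := by
    simp only [hF]
    rw [norm_div, Complex.norm_natCast_cpow_of_pos (by omega), norm_sub_rev 1 s]
    gcongr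
    apply Real.rpow_le_one_of_one_le_of_nonpos
    · simpa using hN'
    · simp; linarith
  have hfin : ‖∑ i ∈ Finset.range N, 1 / ((i:ℂ)+1) ^ s‖ ≤ 1 + Real.log N := by
    have hh := harmonic_le_one_add_log N
    refine le_trans (norm_sum_le _ _) (le_trans ?_ hh)
    unfold harmonic
    push_cast
    apply Finset.sum_le_sum
    intro i _
    rw [norm_div, norm_one, one_div]
    have : ‖((i:ℂ)+1) ^ s‖ = ((i:ℝ)+1) ^ s.re := by
      have := Complex.norm_natCast_cpow_of_pos (n := i+1) (by omega) s
      simpa using this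
    rw [this]
    gcongr
    have h1 : (1:ℝ) ≤ i + 1 := by have : (0:ℝ) ≤ i := by positivity
                                  linarith
    simpa using Real.rpow_le_rpow_of_exponent_le h1 hs.le
  have : ‖∑' m : ℕ, 1 / (((m+N:ℕ):ℂ)+1) ^ s‖ ≤ ‖s‖ * (2/N) + ‖F 0‖ := by
    have := norm_sub_le (∑' m : ℕ, 1 / (((m+N:ℕ):ℂ)+1) ^ s - (0 - F 0)) (F 0)
    have e : (∑' m : ℕ, 1 / (((m+N:ℕ):ℂ)+1) ^ s - (0 - F 0)) - F 0 = ∑' m : ℕ, 1 / (((m+N:ℕ):ℂ)+1) ^ s := by ring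
    rw [e] at this
    linarith
  refine (norm_add_le _ _).trans ?_
  linarith

lemma zeta_one (t : ℝ) (ht : t ≠ 0) (N : ℕ) (hN : 1 ≤ N) :
    ‖riemannZeta (1 + t * I)‖ ≤ (1 + Real.log N) + 1 / |t| + (1 + |t|) * (2 / N) := by
  have hne : (1 : ℂ) + t * I ≠ 1 := by simp [ht]
  have hc : ContinuousAt (fun σ : ℝ => ‖riemannZeta ((σ:ℂ) + t * I)‖) 1 := by
    apply ContinuousAt.norm
    have h1 : ContinuousAt riemannZeta (((1:ℝ):ℂ) + t * I) :=
      (differentiableAt_riemannZeta (by simpa using hne)).continuousAt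
    exact ContinuousAt.comp (f := fun σ : ℝ => (σ:ℂ) + t * I) h1 (by fun_prop)
  have hd : ContinuousAt (fun σ : ℝ => (1 + Real.log N) + 1 / |t| + (|σ| + |t|) * (2 / N)) 1 := by fun_prop
  have := le_of_tendsto_of_tendsto (b := nhdsWithin (1:ℝ) (Set.Ioi 1))
    (hc.tendsto.mono_left nhdsWithin_le_nhds) (hd.tendsto.mono_left nhdsWithin_le_nhds) (by
      filter_upwards [self_mem_nhdsWithin] with σ hσ
      refine (zeta_approx _ (by simpa using hσ) N hN).trans ?_
      gcongr
      · have := Complex.abs_im_le_norm ((σ:ℂ) + t * I - 1)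
        simpa using this
      · refine (norm_add_le _ _).trans ?_
        simp)
  simpa using this

lemma zeta_im (t : ℝ) (ht : t ≠ 0) :
    ‖riemannZeta (t * I)‖ ≤ Real.sqrt |t| * ‖riemannZeta (1 + (-t : ℝ) * I)‖ := by
  set s : ℂ := 1 + (-t : ℝ) * I with hs
  have hfe := riemannZeta_one_sub (s := s) (by
      intro n h
      have := congrArg Complex.im h
      simp [hs, ht] at this) (by simp [hs, ht])
  have e1 : 1 - s = t * I := by simp [hs]
  rw [e1] at hfe
  rw [hfe, norm_mul]
  gcongr
  have hcos : Complex.cos (Real.pi * s / 2) = Complex.sin (Real.pi * (t * I) / 2) := by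
    rw [← Complex.cos_pi_div_two_sub]; congr 1; rw [hs]; push_cast; ring
  rw [hcos]
  set z : ℂ := Real.pi * (t * I) / 2 with hz
  have hz' : z = ((Real.pi * t / 2 : ℝ) : ℂ) * I := by rw [hz]; push_cast; ring
  set y : ℝ := Real.pi * t / 2 with hy
  have hsn : ‖Complex.sin z‖ = |Real.sinh y| := by
    rw [hz', Complex.sin_mul_I, ← Complex.ofReal_sinh, norm_mul, Complex.norm_I, mul_one, Complex.norm_real, Real.norm_eq_abs]
  have hcn : ‖Complex.cos z‖ = Real.cosh y := by
    rw [hz', Complex.cos_mul_I, ← Complex.ofReal_cosh, Complex.norm_real, Real.norm_eq_abs, abs_of_pos (Real.cosh_pos _)]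
  have hS0 : 0 < |Real.sinh y| := by
    rw [abs_pos, Ne, Real.sinh_eq_zero]
    have := Real.pi_pos.ne'
    simp [hy, ht, this]
  have hle : |Real.sinh y| ≤ Real.cosh y := by
    rw [← Real.cosh_abs, Real.abs_sinh]; exact (Real.sinh_lt_cosh _).le
  have hG : ‖Gamma s‖^2 * (2 * |Real.sinh y| * Real.cosh y) = Real.pi * |t| := by
    have h1 := Complex.Gamma_mul_Gamma_one_sub ((t:ℂ) * I)
    have h2 := Complex.Gamma_add_one ((t:ℂ) * I) (by simp [ht])
    have h3 : 1 - (t:ℂ) * I = s := by rw [hs]; push_cast; ring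
    have h4 : (t:ℂ) * I + 1 = (starRingEnd ℂ) s := by simp [hs]; ring
    rw [h3] at h1
    rw [h4, Complex.Gamma_conj] at h2
    have h5 : Complex.sin (Real.pi * (t * I)) = 2 * Complex.sin z * Complex.cos z := by
      rw [← Complex.sin_two_mul]; congr 1; rw [hz]; ring
    have h6 : Complex.sin (Real.pi * (t * I)) ≠ 0 := by
      rw [← norm_pos_iff, h5, norm_mul, norm_mul, hsn, hcn]
      have := Real.cosh_pos y
      simp only [Complex.norm_ofNat]; positivity
    have h7 : (starRingEnd ℂ (Gamma s)) * Gamma s * (2 * Complex.sin z * Complex.cos z) = (t * I) * Real.pi := by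
      rw [h2, mul_assoc ((t:ℂ) * I), h1, ← h5, mul_assoc, div_mul_cancel₀ _ h6]
    have h8 := congrArg norm h7
    simp only [norm_mul, hsn, hcn, RCLike.norm_conj, Complex.norm_ofNat, Complex.norm_real, Complex.norm_I, Real.norm_eq_abs, abs_of_pos Real.pi_pos] at h8
    linarith
  have h2pi : ‖(2 * (Real.pi:ℂ)) ^ (-s)‖ = (2 * Real.pi)⁻¹ := by
    have := Complex.norm_cpow_eq_rpow_re_of_pos (x := 2 * Real.pi) (by positivity) (-s)
    push_cast at this
    rw [this]
    have : (-s).re = -1 := by simp [hs]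
    rw [this, Real.rpow_neg_one]
  rw [norm_mul, norm_mul, norm_mul, h2pi, hsn]
  apply Real.le_sqrt_of_sq_le
  have hk : (‖Gamma s‖ * |Real.sinh y|)^2 ≤ Real.pi * |t| := by
    rw [← hG, mul_pow]
    apply mul_le_mul_of_nonneg_left _ (by positivity)
    nlinarith
  have hp := Real.pi_gt_three
  have : (‖(2:ℂ)‖ * (2 * Real.pi)⁻¹ * ‖Gamma s‖ * |Real.sinh y|)^2 = (‖Gamma s‖ * |Real.sinh y|)^2 / Real.pi^2 := by
    simp only [Complex.norm_ofNat]; field_simp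
  rw [this, div_le_iff₀ (by positivity)]
  refine hk.trans ?_
  nlinarith [mul_nonneg Real.pi_pos.le (abs_nonneg t)]

lemma zeta_im_bound (A : ℝ) (hA : 0 < A) (ε : ℝ) (hε : 0 < ε) (x t : ℝ) (hx : 1 ≤ x)
    (ht : |t| = A * x) :
    ‖riemannZeta (t * I)‖ ≤
      Real.sqrt (A * x) * ((3 + Real.log (A + 1) + 3 / A + 1 / ε) * x ^ ε) := by
  have hx0 : 0 < x := by linarith
  have hAx : 0 < A * x := by positivity
  have htp : 0 < |t| := by rw [ht]; exact hAx
  have ht0 : t ≠ 0 := abs_pos.1 htp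
  refine (zeta_im t ht0).trans ?_
  rw [ht]
  gcongr
  set N := ⌈|t|⌉₊ with hN
  have hN1 : 1 ≤ N := Nat.one_le_iff_ne_zero.2 (Nat.ceil_pos.2 htp).ne'
  have hNl : |t| ≤ N := Nat.le_ceil _
  have hNu : (N:ℝ) < |t| + 1 := Nat.ceil_lt_add_one htp.le
  have hN0 : (0:ℝ) < N := by linarith
  refine (zeta_one (-t) (neg_ne_zero.2 ht0) N hN1).trans ?_
  rw [abs_neg]
  have hlog : Real.log N ≤ Real.log (A + 1) + Real.log x := by
    rw [← Real.log_mul (by positivity) (by positivity)]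
    apply Real.log_le_log hN0
    nlinarith
  have hlogx : Real.log x ≤ x ^ ε / ε := Real.log_le_rpow_div hx0.le hε
  have hinv : 1 / |t| ≤ 1 / A := by
    rw [ht]
    apply one_div_le_one_div_of_le hA
    nlinarith
  have h2 : (1 + |t|) * (2 / N) ≤ 2 / A + 2 := by
    calc (1 + |t|) * (2 / N) ≤ (1 + |t|) * (2 / |t|) := by gcongr
      _ = 2 * (1 / |t|) + 2 := by field_simp
      _ ≤ 2 * (1 / A) + 2 := by gcongr
      _ = 2 / A + 2 := by ring
  have hxe : 1 ≤ x ^ ε := Real.one_le_rpow hx hε.le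
  have hlA : 0 ≤ Real.log (A + 1) := Real.log_nonneg (by linarith)
  have hA3 : 0 ≤ 3 / A := by positivity
  have h3 : 3 + Real.log (A + 1) + 3 / A ≤ (3 + Real.log (A + 1) + 3 / A) * x ^ ε :=
    le_mul_of_one_le_right (by positivity) hxe
  have h4 : 1 / A + 2 / A = 3 / A := by ring
  have h5 : (3 + Real.log (A + 1) + 3 / A + 1 / ε) * x ^ ε =
    (3 + Real.log (A + 1) + 3 / A) * x ^ ε + x ^ ε / ε := by ring
  rw [h5]
  linarith

theorem delangeCoeff_bound (β : ℝ) (hβ : 1 < β) (ε : ℝ) (hε : 0 < ε) :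
    ∃ C : ℝ, 0 < C ∧ ∀ k : ℤ, k ≠ 0 →
      ‖delangeCoeff β k‖ ≤ C * (|k| : ℝ) ^ (-(3 : ℝ) / 2 + ε) := by
  have hL : 0 < Real.log β := Real.log_pos hβ
  have hpi := Real.pi_pos
  obtain ⟨A, hA⟩ : ∃ A : ℝ, A = 2 * Real.pi / Real.log β := ⟨_, rfl⟩
  have hA0 : 0 < A := by rw [hA]; positivity
  have hlA : 0 ≤ Real.log (A + 1) := Real.log_nonneg (by linarith)
  have hβ1 : 0 < β - 1 := by linarith
  refine ⟨(β - 1) / (2 * Real.pi) * A⁻¹ * (Real.sqrt A *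
    (3 + Real.log (A + 1) + 3 / A + 1 / ε)), by positivity, ?_⟩
  intro k hk
  have hx : (1:ℝ) ≤ |(k:ℝ)| := by exact_mod_cast Int.one_le_abs hk
  obtain ⟨x, hxe⟩ : ∃ x : ℝ, x = |(k:ℝ)| := ⟨_, rfl⟩
  rw [← hxe] at hx ⊢
  have hx0 : 0 < x := by linarith
  have earg : 2 * (Real.pi:ℂ) * I * k / Real.log β = ((A * k : ℝ) : ℂ) * I := by
    rw [hA]; push_cast; ring
  have ht : |A * k| = A * x := by rw [abs_mul, abs_of_pos hA0, hxe]
  rw [delangeCoeff, if_neg hk, earg, norm_mul, norm_mul, norm_neg, norm_inv]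
  have n1 : ‖((β:ℂ) - 1) / (2 * Real.pi * I * k)‖ = (β - 1) / (2 * Real.pi) * x⁻¹ := by
    have e : (β:ℂ) - 1 = ((β - 1 : ℝ) : ℂ) := by push_cast; ring
    have e2 : ‖(k:ℂ)‖ = x := by rw [hxe, ← Complex.ofReal_intCast, Complex.norm_real, Real.norm_eq_abs]
    rw [e]
    simp only [norm_div, norm_mul, e2, Complex.norm_real, Real.norm_eq_abs, abs_of_pos hβ1,
      abs_of_pos hpi, Complex.norm_I, Complex.norm_ofNat]
    field_simp
  have n2 : ‖1 + ((A * k : ℝ) : ℂ) * I‖⁻¹ ≤ (A * x)⁻¹ := by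
    apply inv_anti₀ (by positivity)
    rw [← ht]
    have := Complex.abs_im_le_norm (1 + ((A * k : ℝ) : ℂ) * I)
    simpa using this
  have n3 := zeta_im_bound A hA0 ε hε x (A * k) hx ht
  rw [n1]
  have key : x ^ (-(3:ℝ)/2 + ε) = x⁻¹ * x⁻¹ * Real.sqrt x * x ^ ε := by
    rw [← Real.rpow_neg_one, Real.sqrt_eq_rpow, ← Real.rpow_add hx0, ← Real.rpow_add hx0,
      ← Real.rpow_add hx0]
    norm_num
  calc _ ≤ (β - 1) / (2 * Real.pi) * x⁻¹ * (A * x)⁻¹ *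
      (Real.sqrt (A * x) * ((3 + Real.log (A + 1) + 3 / A + 1 / ε) * x ^ ε)) := by gcongr
    _ = _ := by
      rw [key, Real.sqrt_mul hA0.le, mul_inv]; ring
end
end

section
/- For every real β > 1 and every complex number s with Re(s) > 2, the series ∑_{n=1}^∞ S_β(n) n^{-s} and ∑_{k ∈ ℤ} c_β(k) ζ(s - 1 - 2πik/log β) both converge absolutely, and ∑_{n=1}^∞ S_β(n) n^{-s} = -((β-1)/(2 log β)) ζ'(s-1) + ∑_{k ∈ ℤ} c_β(k) ζ(s - 1 - 2πik/log β), where ζ' is the derivative of the Riemann zeta function. -/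
noncomputable section

/-- The periodic function `h_β` from Delange's theorem. -/
def delangeH (β : ℝ) (x : ℝ) : ℂ :=
  ∑' k : ℤ, delangeCoeff β k * Complex.exp (2 * Real.pi * Complex.I * k * x)

/-- The interpolated cumulative sum-of-digits function `S_β(n)`. -/
def cumDigitSumInterp (β : ℝ) (n : ℕ) : ℂ :=
  (((β : ℂ) - 1) / (2 * Real.log β)) * n * Real.log n +
    delangeH β (Real.log n / Real.log β) * n

lemma interp_aux (d m S : ℝ) (hd : 0 ≤ d) (hm : 1 ≤ m) (hS : 0 ≤ S) (h1 : d ≤ 2 / m)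
    (h2 : d ≤ S / m ^ 2) : d ≤ 2 * S ^ (1/4 : ℝ) * m ^ (-(5/4) : ℝ) := by
  have hm0 : 0 < m := by linarith
  have e : d = d ^ (3/4 : ℝ) * d ^ (1/4 : ℝ) := by
    rw [← Real.rpow_add_of_nonneg hd (by norm_num) (by norm_num)]; norm_num
  have h3 : d ^ (3/4 : ℝ) ≤ (2 / m) ^ (3/4 : ℝ) := Real.rpow_le_rpow hd h1 (by norm_num)
  have h4 : d ^ (1/4 : ℝ) ≤ (S / m ^ 2) ^ (1/4 : ℝ) := Real.rpow_le_rpow hd h2 (by norm_num)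
  have h5 : (2 : ℝ) ^ (3/4 : ℝ) ≤ 2 := by
    calc (2 : ℝ) ^ (3/4 : ℝ) ≤ 2 ^ (1 : ℝ) :=
          Real.rpow_le_rpow_of_exponent_le (by norm_num) (by norm_num)
      _ = 2 := by simp
  rw [Real.div_rpow (by norm_num) hm0.le] at h3
  rw [Real.div_rpow hS (by positivity), ← Real.rpow_natCast, ← Real.rpow_mul hm0.le] at h4
  calc d = d ^ (3/4 : ℝ) * d ^ (1/4 : ℝ) := e
    _ ≤ (2 ^ (3/4 : ℝ) / m ^ (3/4 : ℝ)) * (S ^ (1/4 : ℝ) / m ^ (((2 : ℕ) : ℝ) * (1/4) : ℝ)) := by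
        gcongr
    _ = 2 ^ (3/4 : ℝ) * S ^ (1/4 : ℝ) * (m ^ (3/4 : ℝ) * m ^ (((2 : ℕ) : ℝ) * (1/4) : ℝ))⁻¹ := by
        field_simp
    _ = 2 ^ (3/4 : ℝ) * S ^ (1/4 : ℝ) * m ^ (-(5/4) : ℝ) := by
        rw [← Real.rpow_add hm0, ← Real.rpow_neg hm0.le]; norm_num
    _ ≤ _ := by gcongr

lemma cpow_diff_aux (s : ℂ) (hs : 1 < s.re) (m x : ℝ) (hm : 1 ≤ m) (hx : m ≤ x) (hx1 : x ≤ m + 1) :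
    ‖(m : ℂ) ^ (-s) - (x : ℂ) ^ (-s)‖ ≤ 2 * ‖s‖ ^ (1/4 : ℝ) * m ^ (-(5/4) : ℝ) := by
  have hm0 : 0 < m := by linarith
  have key : ∀ y, m ≤ y → y ^ (-s.re) ≤ 1 / m := by
    intro y hy
    calc y ^ (-s.re) ≤ m ^ (-s.re) :=
          Real.rpow_le_rpow_of_nonpos hm0 hy (by linarith)
      _ ≤ m ^ (-1 : ℝ) := Real.rpow_le_rpow_of_exponent_le hm (by linarith)
      _ = 1 / m := by rw [Real.rpow_neg_one, one_div]
  apply interp_aux _ _ _ (norm_nonneg _) hm (norm_nonneg _)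
  · refine (norm_sub_le _ _).trans ?_
    rw [Complex.norm_cpow_eq_rpow_re_of_pos hm0,
      Complex.norm_cpow_eq_rpow_re_of_pos (hm0.trans_le hx)]
    have := key m le_rfl
    have := key x hx
    simp only [Complex.neg_re]
    calc _ ≤ 1 / m + 1 / m := by gcongr
      _ = _ := by ring
  · have := Convex.norm_image_sub_le_of_norm_hasDerivWithin_le (𝕜 := ℝ)
      (f := fun y : ℝ => (y : ℂ) ^ (-s)) (f' := fun y : ℝ => (-s) * (y : ℂ) ^ (-s - 1))
      (s := Set.Icc m (m + 1)) (x := m) (y := x) (C := ‖s‖ / m ^ 2) ?_ ?_ (convex_Icc _ _)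
      ⟨le_rfl, by linarith⟩ ⟨hx, hx1⟩
    · rw [norm_sub_rev]
      refine this.trans ?_
      have : ‖x - m‖ ≤ 1 := by rw [Real.norm_eq_abs, abs_le]; constructor <;> linarith
      exact mul_le_of_le_one_right (by positivity) this
    · intro y hy
      have hy0 : 0 < y := hm0.trans_le hy.1
      refine (hasDerivAt_ofReal_cpow_const hy0.ne' ?_).hasDerivWithinAt
      intro h
      have := congrArg Complex.re h
      simp at this; linarith
    · intro y hy
      have hy0 : 0 < y := hm0.trans_le hy.1
      rw [norm_mul, norm_neg, Complex.norm_cpow_eq_rpow_re_of_pos hy0, div_eq_mul_inv]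
      gcongr
      simp only [Complex.sub_re, Complex.neg_re, Complex.one_re]
      calc y ^ (-s.re - 1) ≤ m ^ (-s.re - 1) :=
            Real.rpow_le_rpow_of_nonpos hm0 hy.1 (by linarith)
        _ ≤ m ^ (-2 : ℝ) := Real.rpow_le_rpow_of_exponent_le hm (by linarith)
        _ = (m ^ 2)⁻¹ := by rw [Real.rpow_neg hm0.le]; norm_num

lemma term_aux (s : ℂ) (hs : 1 < s.re) (m : ℝ) (hm : 1 ≤ m) :
    ‖(m : ℂ) ^ (-s) - ((m : ℂ) ^ (1 - s) / (s - 1) - ((m + 1 : ℝ) : ℂ) ^ (1 - s) / (s - 1))‖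
      ≤ 2 * ‖s‖ ^ (1/4 : ℝ) * m ^ (-(5/4) : ℝ) := by
  have hm0 : 0 < m := by linarith
  have hs1 : 1 - s ≠ 0 := by
    intro h
    have := congrArg Complex.re h
    simp at this; linarith
  have hs2 : s - 1 ≠ 0 := by
    intro h; apply hs1; linear_combination -h
  have := Convex.norm_image_sub_le_of_norm_hasDerivWithin_le (𝕜 := ℝ)
      (f := fun y : ℝ => (y : ℂ) * (m : ℂ) ^ (-s) + (y : ℂ) ^ (1 - s) / (s - 1))
      (f' := fun y : ℝ => (m : ℂ) ^ (-s) - (y : ℂ) ^ (-s))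
      (s := Set.Icc m (m + 1)) (x := m) (y := m + 1)
      (C := 2 * ‖s‖ ^ (1/4 : ℝ) * m ^ (-(5/4) : ℝ)) ?_ ?_ (convex_Icc _ _)
      ⟨le_rfl, by linarith⟩ ⟨by linarith, le_rfl⟩
  · simp only [add_sub_cancel_left, norm_one, mul_one] at this
    refine le_of_eq_of_le (congrArg norm ?_) this
    push_cast
    ring
  · intro y hy
    have hy0 : 0 < y := hm0.trans_le hy.1
    have h1 := (hasDerivAt_ofReal_cpow_const hy0.ne' hs1).div_const (s - 1)
    have h2 : HasDerivAt (fun y : ℝ => (y : ℂ) * (m : ℂ) ^ (-s)) (1 * (m : ℂ) ^ (-s)) y :=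
      (Complex.ofRealCLM.hasDerivAt (x := y)).mul_const _
    refine (HasDerivAt.congr_deriv (h2.add h1) ?_).hasDerivWithinAt
    have : (1 - s - 1) = -s := by ring
    rw [this]
    field_simp
    ring
  · intro y hy
    exact cpow_diff_aux s hs m y hm hy.1 hy.2

lemma zeta_bound_re : ∃ C : ℝ, 0 ≤ C ∧ ∀ s : ℂ, 1 < s.re →
    ‖riemannZeta s‖ ≤ 1 / ‖s - 1‖ + C * ‖s‖ ^ (1/4 : ℝ) := by
  have hsum : Summable (fun n : ℕ => ((n : ℝ) + 1) ^ (-(5/4) : ℝ)) := by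
    have := (summable_nat_add_iff 1).mpr
      (Real.summable_nat_rpow (p := (-(5/4) : ℝ)).mpr (by norm_num))
    simpa using this
  refine ⟨2 * ∑' n : ℕ, ((n : ℝ) + 1) ^ (-(5/4) : ℝ), ?_, ?_⟩
  · have : 0 ≤ ∑' n : ℕ, ((n : ℝ) + 1) ^ (-(5/4) : ℝ) := tsum_nonneg fun n => by positivity
    linarith
  intro s hs
  set a : ℕ → ℂ := fun n => (((n : ℝ) + 1 : ℝ) : ℂ) ^ (1 - s) / (s - 1) with ha
  have hb : ∀ n : ℕ, ‖1 / ((n : ℂ) + 1) ^ s - (a n - a (n + 1))‖ ≤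
      2 * ‖s‖ ^ (1/4 : ℝ) * ((n : ℝ) + 1) ^ (-(5/4) : ℝ) := by
    intro n
    have := term_aux s hs ((n : ℝ) + 1) (by linarith [n.cast_nonneg (α := ℝ)])
    simpa [ha, Complex.cpow_neg] using this
  have hsum' := (hsum.mul_left (2 * ‖s‖ ^ (1/4 : ℝ)))
  have hd := Summable.of_norm_bounded hsum' hb
  have hz : Summable (fun n : ℕ => 1 / ((n : ℂ) + 1) ^ s) := by
    have := (summable_nat_add_iff 1).mpr (Complex.summable_one_div_nat_cpow.mpr hs)
    simpa using this
  have hta : Summable (fun n : ℕ => a n - a (n + 1)) := by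
    exact (hz.sub hd).congr (fun n => by ring)
  have hlim : Filter.Tendsto a Filter.atTop (nhds 0) := by
    rw [tendsto_zero_iff_norm_tendsto_zero]
    have e : ∀ n : ℕ, ‖a n‖ = ((n : ℝ) + 1) ^ (-(s.re - 1)) / ‖s - 1‖ := by
      intro n
      simp only [ha]
      rw [norm_div, Complex.norm_cpow_eq_rpow_re_of_pos (by positivity)]
      simp
    simp_rw [e]
    have h1 := (tendsto_rpow_neg_atTop (y := s.re - 1) (by linarith)).comp
      (Filter.tendsto_atTop_add_const_right _ (1 : ℝ) (tendsto_natCast_atTop_atTop (R := ℝ)))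
    simpa using h1.div_const ‖s - 1‖
  have htel : ∑' n, (a n - a (n + 1)) = a 0 := by
    have h1 := hta.hasSum.tendsto_sum_nat
    simp_rw [Finset.sum_range_sub'] at h1
    have h2 := hlim.const_sub (a 0)
    rw [sub_zero] at h2
    exact tendsto_nhds_unique h1 h2
  have hfin : riemannZeta s = a 0 + ∑' n : ℕ, (1 / ((n : ℂ) + 1) ^ s - (a n - a (n + 1))) := by
    rw [hz.tsum_sub hta, htel, zeta_eq_tsum_one_div_nat_add_one_cpow hs]; ring
  rw [hfin]
  refine (norm_add_le _ _).trans ?_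
  gcongr
  · simp [ha]
  · refine (tsum_of_norm_bounded hsum'.hasSum hb).trans (le_of_eq ?_)
    rw [tsum_mul_left]; ring

lemma zeta_bound_one : ∃ C : ℝ, 0 ≤ C ∧ ∀ t : ℝ, t ≠ 0 →
    ‖riemannZeta (1 + t * Complex.I)‖ ≤ 1 / |t| + C * (1 + |t|) ^ (1/4 : ℝ) := by
  obtain ⟨C, hC, h⟩ := zeta_bound_re
  refine ⟨C, hC, fun t ht => ?_⟩
  have hne : (1 + t * Complex.I) ≠ 1 := by simp [ht]
  have hg : Filter.Tendsto (fun e : ℝ => (1 + t * Complex.I) + (e : ℂ)) (nhdsWithin 0 (Set.Ioi 0))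
      (nhds (1 + t * Complex.I)) := by
    have : Continuous (fun e : ℝ => (1 + t * Complex.I) + (e : ℂ)) := by fun_prop
    have := this.tendsto 0
    simp only [Complex.ofReal_zero, add_zero] at this
    exact this.mono_left nhdsWithin_le_nhds
  have h1 := ((differentiableAt_riemannZeta hne).continuousAt.tendsto.comp hg).norm
  have h2 : Filter.Tendsto (fun e : ℝ => 1 / ‖((1 + t * Complex.I) + (e : ℂ)) - 1‖ +
      C * ‖(1 + t * Complex.I) + (e : ℂ)‖ ^ (1/4 : ℝ)) (nhdsWithin 0 (Set.Ioi 0))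
      (nhds (1 / ‖(1 + t * Complex.I) - 1‖ + C * ‖(1 + t * Complex.I)‖ ^ (1/4 : ℝ))) := by
    refine Filter.Tendsto.add (Filter.Tendsto.div tendsto_const_nhds (hg.sub_const 1).norm ?_)
      ((hg.norm.rpow_const (Or.inr (by norm_num))).const_mul C)
    simp [ht]
  have h3 := le_of_tendsto_of_tendsto h1 h2 (by
    filter_upwards [self_mem_nhdsWithin] with e he
    apply h
    simpa using he)
  refine h3.trans ?_
  gcongr
  · simp
  · refine (norm_add_le _ _).trans ?_
    simp

lemma gamma_cos_aux (t : ℝ) (ht : t ≠ 0) :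
    ‖Complex.Gamma (1 + t * Complex.I) * Complex.cos (Real.pi * (1 + t * Complex.I) / 2)‖ ^ 2
      ≤ Real.pi * |t| / 2 := by
  set y : ℝ := Real.pi * t / 2 with hy
  have hy0 : y ≠ 0 := by positivity
  have hti : (t : ℂ) * Complex.I ≠ 0 := by simp [ht]
  have hG : ‖Complex.Gamma (1 + t * Complex.I)‖ ^ 2 =
      |t| * (Real.pi / ‖Complex.sin (Real.pi * (t * Complex.I))‖) := by
    have hc : ‖Complex.Gamma (1 + t * Complex.I)‖ = ‖Complex.Gamma (1 - t * Complex.I)‖ := by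
      rw [← Complex.norm_conj, ← Complex.Gamma_conj]
      congr 2
      simp [sub_eq_add_neg]
    rw [sq]
    nth_rewrite 2 [hc]
    rw [add_comm, Complex.Gamma_add_one _ hti, norm_mul, mul_assoc, ← norm_mul,
      Complex.Gamma_mul_Gamma_one_sub, norm_div]
    simp [abs_of_pos Real.pi_pos]
  have hcos : Complex.cos (Real.pi * (1 + t * Complex.I) / 2) = -Complex.sin (y * Complex.I) := by
    rw [← Complex.cos_add_pi_div_two]
    congr 1
    simp only [hy]; push_cast; ring
  have hsin : Complex.sin (Real.pi * (t * Complex.I)) =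
      2 * Complex.sin (y * Complex.I) * Complex.cos (y * Complex.I) := by
    rw [← Complex.sin_two_mul]
    congr 1
    simp only [hy]; push_cast; ring
  have e1 : ‖Complex.sin (y * Complex.I)‖ = |Real.sinh y| := by
    rw [Complex.sin_mul_I, norm_mul, Complex.norm_I, mul_one, ← Complex.ofReal_sinh,
      Complex.norm_real, Real.norm_eq_abs]
  have e2 : ‖Complex.cos (y * Complex.I)‖ = Real.cosh y := by
    rw [Complex.cos_mul_I, ← Complex.ofReal_cosh,
      Complex.norm_real, Real.norm_eq_abs, abs_of_pos (Real.cosh_pos y)]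
  have hs0 : 0 < |Real.sinh y| := by simpa using hy0
  have hsc : |Real.sinh y| ≤ Real.cosh y := by
    refine abs_le_of_sq_le_sq ?_ (Real.cosh_pos y).le
    rw [Real.cosh_sq]; linarith
  have hc0 := Real.cosh_pos y
  rw [norm_mul, mul_pow, hG, hcos, norm_neg, hsin, norm_mul, norm_mul, e1, e2]
  simp only [Complex.norm_ofNat]
  have : |t| * (Real.pi / (2 * |Real.sinh y| * Real.cosh y)) * |Real.sinh y| ^ 2 =
      Real.pi * |t| / 2 * (|Real.sinh y| / Real.cosh y) := by
    field_simp
  rw [this]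
  exact mul_le_of_le_one_right (by positivity) ((div_le_one hc0).mpr hsc)

lemma zeta_imag_aux (t : ℝ) (ht : t ≠ 0) :
    ‖riemannZeta (-(t * Complex.I))‖ ≤
      1 / Real.pi * √(Real.pi * |t| / 2) * ‖riemannZeta (1 + t * Complex.I)‖ := by
  have h := riemannZeta_one_sub (s := 1 + t * Complex.I) (fun n hn => by
    have := congrArg Complex.im hn
    simp [ht] at this) (by simp [ht])
  have e : 1 - (1 + t * Complex.I) = -(t * Complex.I) := by ring
  rw [e] at h
  rw [h, norm_mul, mul_assoc (2 * _), norm_mul]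
  gcongr
  · rw [norm_mul]
    have : (2 * (Real.pi : ℂ)) = ((2 * Real.pi : ℝ) : ℂ) := by push_cast; rfl
    rw [this, Complex.norm_cpow_eq_rpow_re_of_pos (by positivity)]
    simp [Real.rpow_neg_one]
    apply le_of_eq
    ring
  · exact Real.le_sqrt_of_sq_le (gamma_cos_aux t ht)

lemma delangeCoeff_summable (β : ℝ) (hβ : 1 < β) : Summable (fun k : ℤ => ‖delangeCoeff β k‖) := by
  obtain ⟨C, hC, h⟩ := zeta_bound_one
  have hl : 0 < Real.log β := Real.log_pos hβ
  set a : ℝ := 2 * Real.pi / Real.log β with ha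
  have ha0 : 0 < a := by positivity
  have hz : ∀ k : ℤ, k ≠ 0 → ‖riemannZeta (2 * Real.pi * Complex.I * k / Real.log β)‖ ≤
      1 / Real.pi * √(Real.pi * a / 2) * (1 / a + C * (1 + a) ^ (1/4 : ℝ)) *
        |(k : ℝ)| ^ (3/4 : ℝ) := by
    intro k hk
    have hk1 : 1 ≤ |(k : ℝ)| := by exact_mod_cast Int.one_le_abs hk
    have hk0 : 0 < |(k : ℝ)| := by linarith
    have hkr : (k : ℝ) ≠ 0 := by exact_mod_cast hk
    have ht : -(a * k) ≠ 0 := by simp [hkr, ha0.ne']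
    have e : 2 * Real.pi * Complex.I * k / Real.log β = -(((-(a * k) : ℝ) : ℂ) * Complex.I) := by
      simp only [ha]; push_cast; ring
    have habs : |-(a * k)| = a * |(k : ℝ)| := by rw [abs_neg, abs_mul, abs_of_pos ha0]
    rw [e]
    refine (zeta_imag_aux _ ht).trans ?_
    have h1 := h _ ht
    rw [habs] at h1 ⊢
    have h2 : 1 / (a * |(k : ℝ)|) ≤ 1 / a * |(k : ℝ)| ^ (1/4 : ℝ) := by
      have h3 : 1 / (a * |(k : ℝ)|) ≤ 1 / a := by
        apply one_div_le_one_div_of_le ha0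
        nlinarith
      have h4 : 1 ≤ |(k : ℝ)| ^ (1/4 : ℝ) := Real.one_le_rpow hk1 (by norm_num)
      exact h3.trans (le_mul_of_one_le_right (by positivity) h4)
    have h5 : (1 + a * |(k : ℝ)|) ^ (1/4 : ℝ) ≤ (1 + a) ^ (1/4 : ℝ) * |(k : ℝ)| ^ (1/4 : ℝ) := by
      rw [← Real.mul_rpow (by positivity) (by positivity)]
      apply Real.rpow_le_rpow (by positivity) _ (by norm_num)
      nlinarith
    have h6 : √(Real.pi * (a * |(k : ℝ)|) / 2) = √(Real.pi * a / 2) * |(k : ℝ)| ^ (1/2 : ℝ) := by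
      rw [← Real.sqrt_eq_rpow, ← Real.sqrt_mul (by positivity)]
      congr 1; ring
    have h7 : |(k : ℝ)| ^ (3/4 : ℝ) = |(k : ℝ)| ^ (1/2 : ℝ) * |(k : ℝ)| ^ (1/4 : ℝ) := by
      rw [← Real.rpow_add hk0]; norm_num
    rw [h6, h7]
    calc _ ≤ 1 / Real.pi * (√(Real.pi * a / 2) * |(k : ℝ)| ^ (1/2 : ℝ)) *
          (1 / a * |(k : ℝ)| ^ (1/4 : ℝ) +
            C * ((1 + a) ^ (1/4 : ℝ) * |(k : ℝ)| ^ (1/4 : ℝ))) := by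
          gcongr
          exact h1.trans (by gcongr)
      _ = _ := by ring
  set K : ℝ := 1 / Real.pi * √(Real.pi * a / 2) * (1 / a + C * (1 + a) ^ (1/4 : ℝ)) with hK
  have hK0 : 0 ≤ K := by positivity
  have hs := (Real.summable_abs_int_rpow (b := 5/4) (by norm_num)).mul_left
    ((β - 1) / (2 * Real.pi) * (1 / a) * K)
  apply Summable.of_norm
  refine Summable.of_norm_bounded_eventually hs ?_
  filter_upwards [(Set.finite_singleton (0 : ℤ)).compl_mem_cofinite] with k hk
  have hk : k ≠ 0 := by simpa using hk
  have hk1 : 1 ≤ |(k : ℝ)| := by exact_mod_cast Int.one_le_abs hk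
  have hk0 : 0 < |(k : ℝ)| := by linarith
  rw [delangeCoeff, if_neg hk]
  simp only [norm_norm]
  rw [norm_mul, norm_mul]
  have n1 : ‖-(((β : ℂ) - 1) / (2 * Real.pi * Complex.I * k))‖ =
      (β - 1) / (2 * Real.pi) * |(k : ℝ)|⁻¹ := by
    have : (β : ℂ) - 1 = ((β - 1 : ℝ) : ℂ) := by push_cast; rfl
    rw [norm_neg, norm_div, this, Complex.norm_real, Real.norm_of_nonneg (by linarith)]
    simp [abs_of_pos Real.pi_pos]
    field_simp
  have n2 : ‖(1 + 2 * Real.pi * Complex.I * k / Real.log β)⁻¹‖ ≤ 1 / a * |(k : ℝ)|⁻¹ := by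
    have e : 1 + 2 * Real.pi * Complex.I * k / Real.log β =
        1 + ((a * k : ℝ) : ℂ) * Complex.I := by
      simp only [ha]; push_cast; ring
    rw [norm_inv, e]
    have : a * |(k : ℝ)| ≤ ‖1 + ((a * k : ℝ) : ℂ) * Complex.I‖ := by
      have := Complex.abs_im_le_norm (1 + ((a * k : ℝ) : ℂ) * Complex.I)
      simpa [abs_mul, abs_of_pos ha0] using this
    calc _ ≤ (a * |(k : ℝ)|)⁻¹ := by gcongr
      _ = _ := by rw [mul_inv, one_div]
  have n3 : |(k : ℝ)| ^ (-(5/4) : ℝ) = |(k : ℝ)|⁻¹ * |(k : ℝ)|⁻¹ * |(k : ℝ)| ^ (3/4 : ℝ) := by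
    rw [← Real.rpow_neg_one, ← Real.rpow_add hk0, ← Real.rpow_add hk0]; norm_num
  rw [n1, n3]
  have hb : 0 ≤ β - 1 := by linarith
  calc _ ≤ (β - 1) / (2 * Real.pi) * |(k : ℝ)|⁻¹ * (1 / a * |(k : ℝ)|⁻¹) *
        (K * |(k : ℝ)| ^ (3/4 : ℝ)) := by
        gcongr
        exact hz k hk
    _ = _ := by ring

lemma log_series_aux (w : ℂ) (hw : 1 < w.re) :
    Summable (fun n : ℕ => (Real.log ((n + 1 : ℕ) : ℝ) : ℂ) * ((n + 1 : ℕ) : ℂ) ^ (-w)) ∧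
    ∑' n : ℕ, (Real.log ((n + 1 : ℕ) : ℝ) : ℂ) * ((n + 1 : ℕ) : ℂ) ^ (-w) =
      -deriv riemannZeta w := by
  have habs : LSeries.abscissaOfAbsConv 1 < (w.re : EReal) := by
    rw [LSeries.abscissaOfAbsConv_one]; exact_mod_cast hw
  have h1 : LSeriesSummable (LSeries.logMul 1) w := LSeriesSummable_logMul_of_lt_re habs
  have h2 := LSeries_deriv habs
  have h3 : deriv (LSeries 1) w = deriv riemannZeta w := by
    apply Filter.EventuallyEq.deriv_eq
    filter_upwards [(isOpen_lt continuous_const Complex.continuous_re).mem_nhds hw] with z hz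
    exact LSeries_one_eq_riemannZeta hz
  have e : ∀ n : ℕ, LSeries.term (LSeries.logMul 1) w (n + 1) =
      (Real.log ((n + 1 : ℕ) : ℝ) : ℂ) * ((n + 1 : ℕ) : ℂ) ^ (-w) := by
    intro n
    rw [LSeries.term_of_ne_zero (by omega), Complex.cpow_neg, div_eq_mul_inv]
    simp only [LSeries.logMul, Pi.one_apply, mul_one]
    rw [Complex.ofReal_log (by positivity)]
    simp
  have h1' : Summable (LSeries.term (LSeries.logMul 1) w) := h1
  refine ⟨?_, ?_⟩
  · exact ((summable_nat_add_iff 1).mpr h1').congr e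
  · rw [← h3, h2, neg_neg, LSeries, h1'.tsum_eq_zero_add, LSeries.term_zero, zero_add]
    exact tsum_congr fun n => (e n).symm

theorem Gbeta_series_formula (β : ℝ) (hβ : 1 < β) (s : ℂ) (hs : 2 < s.re) :
    Summable (fun n : ℕ => ‖cumDigitSumInterp β (n + 1) * ((n + 1 : ℕ) : ℂ) ^ (-s)‖) ∧
    Summable (fun k : ℤ =>
      ‖delangeCoeff β k * riemannZeta (s - 1 - 2 * Real.pi * Complex.I * k / Real.log β)‖) ∧
    (∑' n : ℕ, cumDigitSumInterp β (n + 1) * ((n + 1 : ℕ) : ℂ) ^ (-s)) =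
      -(((β : ℂ) - 1) / (2 * Real.log β)) * deriv riemannZeta (s - 1) +
        ∑' k : ℤ,
          delangeCoeff β k * riemannZeta (s - 1 - 2 * Real.pi * Complex.I * k / Real.log β) := by
  have hc := delangeCoeff_summable β hβ
  have hl : 0 < Real.log β := Real.log_pos hβ
  have hw : 1 < (s - 1).re := by simp; linarith
  obtain ⟨hL1, hL2⟩ := log_series_aux (s - 1) hw
  set G : ℕ → ℤ → ℂ := fun n k => delangeCoeff β k *
    (((n : ℂ) + 1) ^ (s - 1 - 2 * Real.pi * Complex.I * k / Real.log β))⁻¹ with hG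
  have hre : ∀ k : ℤ, (s - 1 - 2 * Real.pi * Complex.I * k / Real.log β).re = s.re - 1 := by
    intro k
    have : 2 * Real.pi * Complex.I * k / Real.log β =
        ((2 * Real.pi * k / Real.log β : ℝ) : ℂ) * Complex.I := by push_cast; ring
    rw [this, Complex.sub_re, Complex.re_ofReal_mul]
    simp
  have hpn : Summable (fun n : ℕ => ((n : ℝ) + 1) ^ (-(s.re - 1))) := by
    have := (summable_nat_add_iff 1).mpr
      (Real.summable_nat_rpow (p := (-(s.re - 1) : ℝ)).mpr (by linarith))
    simpa using this
  have hGn : ∀ n k, ‖G n k‖ = ((n : ℝ) + 1) ^ (-(s.re - 1)) * ‖delangeCoeff β k‖ := by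
    intro n k
    have : ((n : ℂ) + 1) = (((n : ℝ) + 1 : ℝ) : ℂ) := by push_cast; rfl
    simp only [hG]
    rw [norm_mul, norm_inv, this, Complex.norm_cpow_eq_rpow_re_of_pos (by positivity), hre,
      Real.rpow_neg (by positivity), mul_comm]
  have hGs : Summable (Function.uncurry G) := by
    apply Summable.of_norm
    refine (Summable.mul_of_nonneg hpn hc (fun n => by positivity) (fun k => by positivity)).congr ?_
    rintro ⟨n, k⟩
    exact (hGn n k).symm
  have hGk : ∀ k, ∑' n, G n k =
      delangeCoeff β k * riemannZeta (s - 1 - 2 * Real.pi * Complex.I * k / Real.log β) := by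
    intro k
    rw [zeta_eq_tsum_one_div_nat_add_one_cpow (by rw [hre]; linarith), ← tsum_mul_left]
    simp [hG]
  have hGh : ∀ n : ℕ, ∑' k, G n k = delangeH β (Real.log ((n + 1 : ℕ) : ℝ) / Real.log β) *
      ((n : ℂ) + 1) * ((n + 1 : ℕ) : ℂ) ^ (-s) := by
    intro n
    rw [delangeH, mul_assoc, ← tsum_mul_right]
    refine tsum_congr fun k => ?_
    have hn : ((n : ℂ) + 1) ≠ 0 := by exact_mod_cast n.succ_ne_zero
    have e : Complex.exp (2 * Real.pi * Complex.I * k *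
        ((Real.log ((n + 1 : ℕ) : ℝ) / Real.log β : ℝ) : ℂ)) =
        ((n : ℂ) + 1) ^ (2 * Real.pi * Complex.I * k / Real.log β) := by
      rw [Complex.cpow_def_of_ne_zero hn]
      congr 1
      rw [Complex.ofReal_div, Complex.ofReal_log (by positivity)]
      push_cast
      ring
    simp only [hG]
    rw [e, mul_assoc (delangeCoeff β k)]
    congr 1
    have e2 : (s - 1 - 2 * Real.pi * Complex.I * k / Real.log β) =
        -(2 * Real.pi * Complex.I * k / Real.log β + 1 + -s) := by ring
    rw [e2, Complex.cpow_neg, inv_inv, Complex.cpow_add _ _ hn, Complex.cpow_add _ _ hn,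
      Complex.cpow_one]
    push_cast
    ring
  have hterm : ∀ n : ℕ, cumDigitSumInterp β (n + 1) * ((n + 1 : ℕ) : ℂ) ^ (-s) =
      (((β : ℂ) - 1) / (2 * Real.log β)) *
        ((Real.log ((n + 1 : ℕ) : ℝ) : ℂ) * ((n + 1 : ℕ) : ℂ) ^ (-(s - 1))) + ∑' k, G n k := by
    intro n
    have hn : ((n + 1 : ℕ) : ℂ) ≠ 0 := by exact_mod_cast n.succ_ne_zero
    have e2 : -(s - 1) = 1 + -s := by ring
    rw [hGh, e2, Complex.cpow_add _ _ hn, Complex.cpow_one, cumDigitSumInterp]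
    push_cast
    ring
  have hGsum1 : Summable (fun n => ∑' k, G n k) := hGs.prod
  have hLm := hL1.mul_left (((β : ℂ) - 1) / (2 * Real.log β))
  refine ⟨?_, ?_, ?_⟩
  · exact ((hLm.add hGsum1).congr fun n => (hterm n).symm).norm
  · have := hGs.prod_symm.prod.norm
    exact this.congr fun k => congrArg norm (hGk k)
  · rw [tsum_congr hterm, hLm.tsum_add hGsum1, tsum_mul_left, hL2, ← Summable.tsum_comm hGs,
      tsum_congr hGk]
    ring
end
end
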